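/- Let 0 ≠ f ∈ L²(μ). Then for Lebesgue-almost every α ∈ ℝ, the function f_α = V_α f satisfies f_α(t) ≠ 0 for (μ_α)_s-almost every t ∈ ℝ (for any Borel representative of f_α); that is, the set {α ∈ ℝ : (μ_α)_s({t ∈ ℝ : f_α(t) = 0}) > 0} has Lebesgue measure zero. -/

import Mathlib

/-!
Write `F(z) = ∫ (t - z)⁻¹ dμ(t)` and `G(z) = ∫ f(t) (t - z)⁻¹ dμ(t)`. The Aronszajn–Krein formulas
say that the Cauchy integrals of `μ_α` and of `f_α μ_α` are `F / (1 + α F)` and `G / (1 + α F)`.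
By the first one and differentiation of measures, the singular part of `μ_α` lives on the set where
`F` has the boundary value `-1 / α`, and `μ_α` gives no mass to the set where `F` has a real
nonzero boundary value different from `-1 / α`.

Let `ω = π⁻¹ (1 + α²)⁻¹ dα` be harmonic measure at `i`, let `Π = dω(α) dμ_α(t)` on pairs `(α, t)`,
and let `v(α, t) = b(α) f_α(t)`, where `b(α) = (α - i) / (α + i)`. The Cauchy integral of `v dΠ` in
the variable `t` is `G(z) ∫ b(α) (1 + α F(z))⁻¹ dω(α)`. The last factor vanishes for `z` in the
lower half-plane, where the integrand extends to a bounded holomorphic function of `α` in the upper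
half-plane with a zero at `i`, and it does not vanish for `z` in the upper half-plane. Thus `v`
behaves like the boundary function of a vector-valued Hardy class: if `v` vanishes over a set
`E ⊆ ℝ` of positive length, then `G = 0` in the upper half-plane, whence `f = 0`.

This applies to the set `E` of those `t` where `F` has a real boundary value `a ≠ 0` and
`f_{-1/a}(t) = 0`: over `E` only `α = -1 / a` is charged, so `v = 0` there. For `f ≠ 0` the set `E`
therefore has length zero. The `t`-marginal of `Π` is absolutely continuous, because
`∫ Im (F / (1 + α F)) dα = π`, so `μ_α(E) = 0` for almost every `α`. Finally, almost every zero of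
`f_α` with respect to the singular part of `μ_α` lies in `E`.
-/

open MeasureTheory Complex Set

local notation "⟪" x ", " y "⟫" => @inner ℂ _ _ x y

section

open Filter Topology ProbabilityTheory
open scoped ENNReal NNReal ComplexConjugate

/-! ### Cauchy transforms and differentiation of measures -/

/-- The Cauchy (Borel) transform of a measure on the line. -/
noncomputable def cauchyTransform (m : Measure ℝ) (z : ℂ) : ℂ := ∫ t, ((t : ℂ) - z)⁻¹ ∂m

/-- The Poisson kernel of the upper half-plane, without the customary factor `1 / π`. -/
noncomputable def poisson (z : ℂ) (t : ℝ) : ℝ := z.im / normSq ((t : ℂ) - z)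

lemma ofReal_sub_ne_zero {z : ℂ} (hz : z.im ≠ 0) (t : ℝ) : (t : ℂ) - z ≠ 0 := fun h =>
  hz (by simpa using congrArg Complex.im h)

lemma norm_resolvent_le {z : ℂ} (hz : z.im ≠ 0) (t : ℝ) :
    ‖((t : ℂ) - z)⁻¹‖ ≤ |z.im|⁻¹ := by
  rw [norm_inv]
  exact inv_anti₀ (abs_pos.mpr hz) (by simpa using Complex.abs_im_le_norm ((t : ℂ) - z))

lemma measurable_resolvent (z : ℂ) : Measurable fun t : ℝ => ((t : ℂ) - z)⁻¹ := by
  fun_prop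

lemma integrable_resolvent (m : Measure ℝ) [IsFiniteMeasure m] {z : ℂ} (hz : z.im ≠ 0) :
    Integrable (fun t : ℝ => ((t : ℂ) - z)⁻¹) m :=
  .of_bound (measurable_resolvent z).aestronglyMeasurable |z.im|⁻¹
    (ae_of_all _ (norm_resolvent_le hz))

lemma resolvent_im (z : ℂ) (t : ℝ) : (((t : ℂ) - z)⁻¹).im = poisson z t := by
  simp [Complex.inv_im, poisson]

lemma poisson_pos {z : ℂ} (hz : 0 < z.im) (t : ℝ) : 0 < poisson z t :=
  div_pos hz (normSq_pos.mpr (ofReal_sub_ne_zero hz.ne' t))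

lemma integrable_poisson (m : Measure ℝ) [IsFiniteMeasure m] {z : ℂ} (hz : z.im ≠ 0) :
    Integrable (poisson z) m := by
  simpa only [RCLike.im_to_complex, resolvent_im] using (integrable_resolvent m hz).im

lemma cauchyTransform_im (m : Measure ℝ) [IsFiniteMeasure m] {z : ℂ} (hz : z.im ≠ 0) :
    (cauchyTransform m z).im = ∫ t, poisson z t ∂m := by
  simpa only [RCLike.im_to_complex, resolvent_im, cauchyTransform] using
    (integral_im (𝕜 := ℂ) (integrable_resolvent m hz)).symm

lemma cauchyTransform_conj (m : Measure ℝ) (z : ℂ) :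
    cauchyTransform m (conj z) = conj (cauchyTransform m z) := by
  simp [cauchyTransform, ← integral_conj]

lemma cauchyTransform_im_pos (m : Measure ℝ) [IsFiniteMeasure m] (hm : m ≠ 0) {z : ℂ}
    (hz : 0 < z.im) : 0 < (cauchyTransform m z).im := by
  rw [cauchyTransform_im m hz.ne', integral_pos_iff_support_of_nonneg
    (fun t => (poisson_pos hz t).le) (integrable_poisson m hz.ne'),
    eq_univ_of_forall (s := Function.support _) fun t => (poisson_pos hz t).ne']
  exact Measure.measure_univ_pos.mpr hm

lemma cauchyTransform_im_neg (m : Measure ℝ) [IsFiniteMeasure m] (hm : m ≠ 0) {z : ℂ}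
    (hz : z.im < 0) : (cauchyTransform m z).im < 0 := by
  have hconj := cauchyTransform_im_pos m hm (z := conj z) (by simpa using hz)
  simpa [cauchyTransform_conj] using hconj

lemma cauchyTransform_im_ne_zero (m : Measure ℝ) [IsFiniteMeasure m] (hm : m ≠ 0) {z : ℂ}
    (hz : z.im ≠ 0) : (cauchyTransform m z).im ≠ 0 :=
  hz.lt_or_gt.elim (fun h => (cauchyTransform_im_neg m hm h).ne)
    fun h => (cauchyTransform_im_pos m hm h).ne'

lemma indicator_closedBall_le_poisson (x : ℝ) {ε : ℝ} (hε : 0 < ε) (t : ℝ) :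
    (Metric.closedBall x ε).indicator 1 t ≤ 2 * ε * poisson (x + ε * I) t := by
  have him : ((x : ℂ) + ε * I).im = ε := by simp
  by_cases ht : t ∈ Metric.closedBall x ε
  · have hpos : 0 < normSq ((t : ℂ) - (x + ε * I)) :=
      normSq_pos.mpr (ofReal_sub_ne_zero (by rw [him]; exact hε.ne') t)
    have hsq : (t - x) ^ 2 ≤ ε ^ 2 := sq_le_sq.mpr (by
      rwa [abs_of_pos hε, ← Real.dist_eq])
    have hnorm : normSq ((t : ℂ) - (x + ε * I)) = (t - x) ^ 2 + ε ^ 2 := by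
      simp [normSq_apply, sq]
    rw [indicator_of_mem ht, poisson, him, ← mul_div_assoc, Pi.one_apply, le_div_iff₀ hpos, hnorm]
    nlinarith
  · rw [indicator_of_notMem ht]
    exact mul_nonneg (by positivity) (poisson_pos (by rwa [him]) t).le

lemma measure_closedBall_le (m : Measure ℝ) [IsFiniteMeasure m] (x : ℝ) {ε : ℝ} (hε : 0 < ε) :
    m.real (Metric.closedBall x ε) ≤ 2 * ε * (cauchyTransform m (x + ε * I)).im := by
  have hz : ((x : ℂ) + ε * I).im ≠ 0 := by simpa using hε.ne'
  rw [cauchyTransform_im m hz, ← integral_const_mul, ← integral_indicator_one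
    Metric.isClosed_closedBall.measurableSet]
  exact integral_mono
    ((integrable_const (1 : ℝ)).indicator Metric.isClosed_closedBall.measurableSet)
    ((integrable_poisson m hz).const_mul _) (indicator_closedBall_le_poisson x hε)

lemma inv_cauchyTransform_im_le (m : Measure ℝ) [IsFiniteMeasure m] (x : ℝ) {ε : ℝ}
    (hε : 0 < ε) :
    (ENNReal.ofReal (cauchyTransform m (x + ε * I)).im)⁻¹ ≤
      volume (Metric.closedBall x ε) / m (Metric.closedBall x ε) := by
  have h := measure_closedBall_le m x hε
  rw [ENNReal.le_div_iff_mul_le (Or.inr (by simpa using hε)) (Or.inl (measure_ne_top _ _)),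
    mul_comm, ← div_eq_mul_inv]
  apply ENNReal.div_le_of_le_mul
  rw [Real.volume_closedBall, ← ENNReal.ofReal_mul (by positivity)]
  exact (ENNReal.le_ofReal_iff_toReal_le (measure_ne_top _ _)
    (measureReal_nonneg.trans h)).mpr h

/-- The heights `1 / (n + 1)` at which boundary limits are taken; a sequence keeps the sets of
convergence measurable. -/
noncomputable def height (n : ℕ) : ℝ := 1 / ((n : ℝ) + 1)

lemma height_pos (n : ℕ) : 0 < height n := Nat.one_div_pos_of_nat

lemma tendsto_height : Tendsto height atTop (𝓝[>] 0) :=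
  tendsto_nhdsWithin_iff.mpr
    ⟨tendsto_one_div_add_atTop_nhds_zero_nat, Eventually.of_forall height_pos⟩

lemma ae_not_tendsto_cauchyTransform_im_zero (m : Measure ℝ) [IsFiniteMeasure m] :
    ∀ᵐ x ∂m, ¬ Tendsto (fun n : ℕ => (cauchyTransform m ((x : ℝ) + height n * I)).im)
      atTop (𝓝 0) := by
  filter_upwards [Besicovitch.ae_tendsto_rnDeriv (volume : Measure ℝ) m,
    Measure.rnDeriv_lt_top (volume : Measure ℝ) m] with x hx hlt h0
  have hinv : Tendsto (fun n : ℕ =>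
      (ENNReal.ofReal (cauchyTransform m ((x : ℝ) + height n * I)).im)⁻¹) atTop (𝓝 ∞) := by
    simpa using tendsto_inv_iff.mpr (ENNReal.tendsto_ofReal h0)
  have htop : Tendsto (fun n : ℕ => volume (Metric.closedBall x (height n)) /
      m (Metric.closedBall x (height n))) atTop (𝓝 ∞) :=
    tendsto_of_tendsto_of_tendsto_of_le_of_le hinv tendsto_const_nhds
      (fun n => inv_cauchyTransform_im_le m x (height_pos n)) (fun _ => le_top)
  exact hlt.ne (tendsto_nhds_unique (hx.comp tendsto_height) htop)

lemma singularPart_ae_tendsto_volume_div (m : Measure ℝ) [IsFiniteMeasure m] :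
    ∀ᵐ x ∂(m.singularPart volume),
      Tendsto (fun r => volume (Metric.closedBall x r) / m (Metric.closedBall x r))
        (𝓝[>] 0) (𝓝 0) := by
  filter_upwards [Besicovitch.ae_tendsto_rnDeriv volume (m.singularPart volume),
    (Measure.mutuallySingular_singularPart m volume).symm.rnDeriv_ae_eq_zero] with x hx hzero
  rw [hzero] at hx
  exact tendsto_of_tendsto_of_tendsto_of_le_of_le tendsto_const_nhds hx (fun _ => zero_le)
    fun r => ENNReal.div_le_div_left (Measure.singularPart_le m volume _) _

lemma singularPart_ae_tendsto_cauchyTransform_im (m : Measure ℝ) [IsFiniteMeasure m] :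
    ∀ᵐ x ∂(m.singularPart volume),
      Tendsto (fun n : ℕ => (cauchyTransform m ((x : ℝ) + height n * I)).im) atTop atTop := by
  filter_upwards [singularPart_ae_tendsto_volume_div m] with x hx
  have hinv : Tendsto (fun n : ℕ =>
      (ENNReal.ofReal (cauchyTransform m ((x : ℝ) + height n * I)).im)⁻¹) atTop (𝓝 0) :=
    tendsto_of_tendsto_of_tendsto_of_le_of_le tendsto_const_nhds (hx.comp tendsto_height)
      (fun _ => zero_le) (fun n => inv_cauchyTransform_im_le m x (height_pos n))
  exact ENNReal.tendsto_ofReal_nhds_top.mp (by simpa using tendsto_inv_iff.mpr hinv)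

lemma absolutelyContinuous_of_closedBall_le (m : Measure ℝ) [IsFiniteMeasure m] {C : ℝ≥0∞}
    (hC : C ≠ ∞)
    (h : ∀ (x r : ℝ), 0 < r → m (Metric.closedBall x r) ≤ C * volume (Metric.closedBall x r)) :
    m ≪ volume := by
  rw [← Measure.singularPart_eq_zero, ← ae_eq_bot, ← Filter.eventually_false_iff_eq_bot]
  filter_upwards [singularPart_ae_tendsto_volume_div m] with x hx
  have hlower : ∀ᶠ r in 𝓝[>] (0 : ℝ), C⁻¹ ≤
      volume (Metric.closedBall x r) / m (Metric.closedBall x r) := by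
    filter_upwards [self_mem_nhdsWithin] with r hr
    rw [ENNReal.le_div_iff_mul_le (Or.inr (by simpa using hr)) (Or.inl (measure_ne_top _ _)),
      mul_comm, ← div_eq_mul_inv]
    exact ENNReal.div_le_of_le_mul (by rw [mul_comm]; exact h x r hr)
  exact hC (by simpa using ge_of_tendsto hx hlower)

/-! ### Blaschke factors and harmonic measure -/

lemma measure_ext_of_integral_pow_eq {E : Type*} [TopologicalSpace E] [PolishSpace E]
    [MeasurableSpace E] [BorelSpace E] {P Q : Measure E} [IsFiniteMeasure P] [IsFiniteMeasure Q]
    {φ : E → ℂ} (hφ : Continuous φ) (hinj : Function.Injective φ) (hnorm : ∀ x, ‖φ x‖ = 1)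
    (h : ∀ n : ℕ, ∫ x, φ x ^ n ∂P = ∫ x, φ x ^ n ∂Q) : P = Q := by
  have hmonomial (m n : ℕ) :
      ∫ x, φ x ^ m * conj (φ x) ^ n ∂P = ∫ x, φ x ^ m * conj (φ x) ^ n ∂Q := by
    have hone (x : E) : φ x * conj (φ x) = 1 := by simp [Complex.mul_conj', hnorm]
    obtain ⟨k, rfl⟩ | ⟨k, rfl⟩ := (le_total n m).imp Nat.exists_eq_add_of_le
      Nat.exists_eq_add_of_le
    · have hcancel (x : E) : φ x ^ (n + k) * conj (φ x) ^ n = φ x ^ k := by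
        rw [pow_add, mul_right_comm, ← mul_pow, hone, one_pow, one_mul]
      simpa only [hcancel] using h k
    · have hcancel (x : E) : φ x ^ m * conj (φ x) ^ (m + k) = conj (φ x ^ k) := by
        rw [pow_add, ← mul_assoc, ← mul_pow, hone, one_pow, one_mul, map_pow]
      simpa only [hcancel, integral_conj] using congrArg conj (h k)
  let b : BoundedContinuousFunction E ℂ := .ofNormedAddCommGroup φ hφ 1 fun x => (hnorm x).le
  refine ext_of_forall_mem_subalgebra_integral_eq_of_polish (𝕜 := ℂ)
    (A := StarAlgebra.adjoin ℂ {b}) (fun s t hst => ?_) (fun g hg => ?_)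
  · exact ⟨φ, ⟨⟨φ, hφ⟩, ⟨b, StarAlgebra.self_mem_adjoin_singleton ℂ b, rfl⟩, rfl⟩, hinj.ne hst⟩
  · have hspan : g ∈ Submodule.span ℂ (Submonoid.closure {b, star b} :
        Set (BoundedContinuousFunction E ℂ)) := by
      rw [← Algebra.adjoin_eq_span, ← singleton_union, ← star_singleton]
      exact hg
    clear hg
    induction hspan using Submodule.span_induction with
    | mem g hg =>
      obtain ⟨m, n, rfl⟩ := (Submonoid.mem_closure_pair _ _ _).mp hg
      exact hmonomial m n
    | zero => simp
    | add g₁ g₂ _ _ h₁ h₂ =>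
      simp only [BoundedContinuousFunction.coe_add, Pi.add_apply]
      rw [integral_add (g₁.integrable P) (g₂.integrable P),
        integral_add (g₁.integrable Q) (g₂.integrable Q), h₁, h₂]
    | smul c g _ ih =>
      simp only [BoundedContinuousFunction.coe_smul, integral_smul, ih]

/-- The Blaschke factor of the half-plane containing `z`, with its zero at `z`, on the real
line. -/
noncomputable def blaschke (z : ℂ) (t : ℝ) : ℂ := ((t : ℂ) - z) * ((t : ℂ) - conj z)⁻¹

lemma ofReal_sub_conj_ne_zero {z : ℂ} (hz : z.im ≠ 0) (t : ℝ) : (t : ℂ) - conj z ≠ 0 :=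
  ofReal_sub_ne_zero (by simpa using hz) t

lemma norm_blaschke {z : ℂ} (hz : z.im ≠ 0) (t : ℝ) : ‖blaschke z t‖ = 1 := by
  have hnorm : ‖(t : ℂ) - conj z‖ = ‖(t : ℂ) - z‖ := by
    rw [← RCLike.norm_conj]
    simp
  rw [blaschke, norm_mul, norm_inv, hnorm, mul_inv_cancel₀]
  exact norm_ne_zero_iff.mpr (ofReal_sub_ne_zero hz t)

lemma blaschke_eq_one_add {z : ℂ} (hz : z.im ≠ 0) (t : ℝ) :
    blaschke z t = 1 + (conj z - z) * ((t : ℂ) - conj z)⁻¹ := by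
  have := ofReal_sub_conj_ne_zero hz t
  rw [blaschke]
  field_simp
  ring

lemma continuous_blaschke {z : ℂ} (hz : z.im ≠ 0) : Continuous (blaschke z) :=
  .mul (by fun_prop) (.inv₀ (by fun_prop) (ofReal_sub_conj_ne_zero hz))

lemma measurable_blaschke (z : ℂ) : Measurable (blaschke z) := by
  unfold blaschke
  fun_prop

lemma blaschke_injective {z : ℂ} (hz : z.im ≠ 0) : Function.Injective (blaschke z) := by
  intro s t h
  rw [blaschke_eq_one_add hz, blaschke_eq_one_add hz] at h
  have hne : conj z - z ≠ 0 := fun h0 => hz (conj_eq_iff_im.mp (sub_eq_zero.mp h0))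
  have hinv := inv_injective (mul_left_cancel₀ hne (add_left_cancel h))
  exact_mod_cast sub_left_injective hinv

lemma tendsto_blaschke {z : ℂ} (hz : z.im ≠ 0) : Tendsto (blaschke z) (cocompact ℝ) (𝓝 1) := by
  have hsub : Tendsto (fun t : ℝ => (t : ℂ) - conj z) (cocompact ℝ) (cocompact ℂ) :=
    (Homeomorph.subRight (conj z)).isClosedEmbedding.tendsto_cocompact.comp
      Complex.isometry_ofReal.isClosedEmbedding.tendsto_cocompact
  rw [← Metric.cobounded_eq_cocompact (α := ℂ)] at hsub
  simpa [funext (blaschke_eq_one_add hz)] using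
    ((tendsto_inv₀_cobounded.comp hsub).const_mul (conj z - z)).const_add 1

lemma ofReal_poisson (z : ℂ) (t : ℝ) :
    (poisson z t : ℂ) = z.im * ((t : ℂ) - z)⁻¹ * ((t : ℂ) - conj z)⁻¹ := by
  rw [poisson, ofReal_div, normSq_eq_conj_mul_self, div_eq_mul_inv, mul_inv]
  simp
  ring

lemma hasDerivAt_blaschke {z : ℂ} (hz : z.im ≠ 0) (t : ℝ) :
    HasDerivAt (blaschke z) (2 * I * (poisson z t * blaschke z t)) t := by
  have hne := ofReal_sub_ne_zero hz t
  have hne_conj := ofReal_sub_conj_ne_zero hz t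
  have hcoe : HasDerivAt (fun t : ℝ => (t : ℂ)) 1 t := Complex.ofRealCLM.hasDerivAt
  refine ((hcoe.sub_const z).mul ((hcoe.sub_const (conj z)).fun_inv hne_conj)).congr_deriv ?_
  rw [ofReal_poisson, blaschke]
  have him : z - conj z = 2 * I * z.im := by rw [Complex.sub_conj]; push_cast; ring
  field_simp
  linear_combination him

/-- The harmonic measure at `z` of the upper half-plane, which is a Cauchy distribution. -/
noncomputable def harmonicMeasure (z : ℂ) : Measure ℝ := cauchyMeasure z.re z.im.toNNReal

instance (z : ℂ) : IsProbabilityMeasure (harmonicMeasure z) :=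
  inferInstanceAs (IsProbabilityMeasure (cauchyMeasure _ _))

lemma cauchyPDFReal_eq_poisson {z : ℂ} (hz : 0 < z.im) (t : ℝ) :
    cauchyPDFReal z.re z.im.toNNReal t = Real.pi⁻¹ * poisson z t := by
  have hnorm : normSq ((t : ℂ) - z) = (t - z.re) ^ 2 + z.im ^ 2 := by
    simp [normSq_apply, sq]
  rw [cauchyPDFReal_def, poisson, hnorm, Real.coe_toNNReal _ hz.le, div_eq_mul_inv, mul_assoc]

lemma integrable_poisson_volume {z : ℂ} (hz : 0 < z.im) : Integrable (poisson z) := by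
  have hpdf := (integrable_cauchyPDFReal z.re (γ := z.im.toNNReal)).const_mul Real.pi
  simpa [cauchyPDFReal_eq_poisson hz, Real.pi_ne_zero] using hpdf

lemma integral_poisson_volume {z : ℂ} (hz : 0 < z.im) : ∫ t, poisson z t = Real.pi := by
  have hpdf := integral_cauchyPDFReal_eq_one z.re (Real.toNNReal_pos.mpr hz).ne'
  simp only [cauchyPDFReal_eq_poisson hz, integral_const_mul] at hpdf
  exact (inv_mul_eq_one₀ Real.pi_ne_zero).mp hpdf |>.symm

lemma harmonicMeasure_eq_withDensity {z : ℂ} (hz : 0 < z.im) :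
    harmonicMeasure z = volume.withDensity fun t => ENNReal.ofReal (Real.pi⁻¹ * poisson z t) := by
  rw [harmonicMeasure, cauchyMeasure_of_scale_ne_zero _ (Real.toNNReal_pos.mpr hz).ne']
  exact congrArg _ (funext fun t => by rw [cauchyPDF, cauchyPDFReal_eq_poisson hz])

lemma measurable_poisson (z : ℂ) : Measurable (poisson z) := by
  unfold poisson
  fun_prop

lemma integral_harmonicMeasure {z : ℂ} (hz : 0 < z.im) (g : ℝ → ℂ) :
    ∫ t, g t ∂(harmonicMeasure z) = (Real.pi : ℂ)⁻¹ * ∫ t, poisson z t * g t := by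
  have hmeas := measurable_poisson z
  rw [harmonicMeasure_eq_withDensity hz, integral_withDensity_eq_integral_toReal_smul
    (by fun_prop) (ae_of_all _ fun _ => ENNReal.ofReal_lt_top), ← integral_const_mul]
  refine integral_congr_ae (ae_of_all _ fun t => ?_)
  have hnonneg : 0 ≤ Real.pi⁻¹ * poisson z t :=
    mul_nonneg (inv_nonneg.mpr Real.pi_pos.le) (poisson_pos hz t).le
  simp [ENNReal.toReal_ofReal hnonneg, mul_assoc]

lemma volume_absolutelyContinuous_harmonicMeasure {z : ℂ} (hz : 0 < z.im) :
    volume ≪ harmonicMeasure z := by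
  have hmeas := measurable_poisson z
  rw [harmonicMeasure_eq_withDensity hz]
  refine withDensity_absolutelyContinuous' (by fun_prop) (ae_of_all _ fun t => ?_)
  simpa using mul_pos (inv_pos.mpr Real.pi_pos) (poisson_pos hz t)

lemma integral_blaschke_pow_harmonicMeasure {z : ℂ} (hz : 0 < z.im) {n : ℕ} (hn : n ≠ 0) :
    ∫ t, blaschke z t ^ n ∂(harmonicMeasure z) = 0 := by
  have hderiv (t : ℝ) : HasDerivAt (fun t : ℝ => blaschke z t ^ n)
      ((2 * I * n) * (poisson z t * blaschke z t ^ n)) t := by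
    refine ((hasDerivAt_blaschke hz.ne' t).pow n).congr_deriv ?_
    rw [← pow_sub_one_mul hn (blaschke z t)]
    ring
  have hint : Integrable fun t : ℝ => (poisson z t : ℂ) * blaschke z t ^ n :=
    (integrable_poisson_volume hz).ofReal.mul_bdd (c := 1)
      ((continuous_blaschke hz.ne').pow n).aestronglyMeasurable
      (ae_of_all _ fun t => by simp [norm_blaschke hz.ne'])
  have hlim := (tendsto_blaschke hz.ne').pow n
  have hftc := integral_of_hasDerivAt_of_tendsto hderiv (hint.const_mul _)
    (hlim.mono_left atBot_le_cocompact) (hlim.mono_left atTop_le_cocompact)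
  rw [integral_const_mul, sub_self] at hftc
  rw [integral_harmonicMeasure hz, (mul_eq_zero.mp hftc).resolve_left (by simp [hn]), mul_zero]

/-- The hypothesis on the powers makes `P` a multiple of harmonic measure. -/
lemma measure_eq_zero_of_integral_blaschke_pow {z : ℂ} (hz : 0 < z.im) (P : Measure ℝ)
    [IsFiniteMeasure P] (h : ∀ n : ℕ, n ≠ 0 → ∫ t, blaschke z t ^ n ∂P = 0) {s : Set ℝ}
    (hvol : volume s ≠ 0) (hP : P s = 0) : P = 0 := by
  have hsmul : P = P univ • harmonicMeasure z := by
    have : IsFiniteMeasure (P univ • harmonicMeasure z) :=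
      Measure.smul_finite _ (measure_ne_top P univ)
    refine measure_ext_of_integral_pow_eq (continuous_blaschke hz.ne') (blaschke_injective hz.ne')
      (norm_blaschke hz.ne') fun n => ?_
    rcases eq_or_ne n 0 with rfl | hn
    · simp [Measure.real]
    · rw [h n hn, integral_smul_measure, integral_blaschke_pow_harmonicMeasure hz hn, smul_zero]
  rw [hsmul, Measure.smul_apply, smul_eq_mul] at hP
  have hs : harmonicMeasure z s ≠ 0 := mt (@volume_absolutelyContinuous_harmonicMeasure z hz s) hvol
  exact Measure.measure_univ_eq_zero.mp ((mul_eq_zero.mp hP).resolve_right hs)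

/-! ### A uniqueness theorem of Hardy class type -/

lemma topologicalClosure_span_le_comap {𝕜 M : Type*} [NormedField 𝕜] [AddCommGroup M] [Module 𝕜 M]
    [TopologicalSpace M] [IsTopologicalAddGroup M] [ContinuousSMul 𝕜 M] (T : M →L[𝕜] M) {s : Set M}
    (h : ∀ x ∈ s, T x ∈ (Submodule.span 𝕜 s).topologicalClosure) :
    (Submodule.span 𝕜 s).topologicalClosure ≤
      (Submodule.span 𝕜 s).topologicalClosure.comap (T : M →ₗ[𝕜] M) :=
  Submodule.topologicalClosure_minimal _ (Submodule.span_le.mpr h)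
    ((Submodule.span 𝕜 s).isClosed_topologicalClosure.preimage T.continuous)

lemma exists_sub_mem_closure_span_pow_inner_pow_eq_zero {𝕜 H : Type*} [RCLike 𝕜]
    [NormedAddCommGroup H] [InnerProductSpace 𝕜 H] [CompleteSpace H] (U : H →L[𝕜] H) (x : H) :
    ∃ q : H, x - q ∈ (Submodule.span 𝕜 (range fun n : ℕ => (U ^ (n + 1)) x)).topologicalClosure ∧
      ∀ n : ℕ, inner 𝕜 q ((U ^ (n + 1)) q) = 0 := by
  set S := Submodule.span 𝕜 (range fun n : ℕ => (U ^ (n + 1)) x)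
  set N := S.topologicalClosure
  have hgen (n : ℕ) : (U ^ (n + 1)) x ∈ N :=
    S.le_topologicalClosure (Submodule.subset_span ⟨n, rfl⟩)
  have hinv (n : ℕ) : N ≤ N.comap ((U ^ n : H →L[𝕜] H) : H →ₗ[𝕜] H) := by
    refine topologicalClosure_span_le_comap (U ^ n) ?_
    rintro _ ⟨k, rfl⟩
    simpa only [← mul_apply_eq_comp, ← pow_add, ← add_assoc] using hgen (n + k)
  have hproj := N.starProjection_apply_mem x
  refine ⟨x - N.starProjection x, by simp [N], fun n => ?_⟩
  refine (Submodule.mem_orthogonal' _ _).mp (N.sub_starProjection_mem_orthogonal x) _ ?_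
  rw [map_sub]
  exact N.sub_mem (hgen n) (hinv _ hproj)

section HardyUniqueness

variable {X : Type*} [MeasurableSpace X] {ν : Measure X}

/-- Multiplication by an essentially bounded function as an operator on `L²`. -/
noncomputable def mulOp (φ : Lp ℂ ∞ ν) : Lp ℂ 2 ν →L[ℂ] Lp ℂ 2 ν :=
  (ContinuousLinearMap.mul ℂ ℂ).holderL ν ∞ 2 2 φ

lemma coeFn_mulOp {φ : X → ℂ} (hφ : MemLp φ ∞ ν) (u : Lp ℂ 2 ν) :
    mulOp hφ.toLp u =ᵐ[ν] fun x => φ x * u x := by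
  filter_upwards [(ContinuousLinearMap.mul ℂ ℂ).coeFn_holder (r := 2) hφ.toLp u,
    hφ.coeFn_toLp] with x hx hφx
  rw [← hφx]
  exact hx

lemma coeFn_pow_of_coeFn {T : Lp ℂ 2 ν →L[ℂ] Lp ℂ 2 ν} {φ : X → ℂ}
    (hT : ∀ u : Lp ℂ 2 ν, T u =ᵐ[ν] fun x => φ x * u x) (n : ℕ) (u : Lp ℂ 2 ν) :
    (T ^ n) u =ᵐ[ν] fun x => φ x ^ n * u x := by
  induction n with
  | zero => simp
  | succ n ih =>
    filter_upwards [ih, hT ((T ^ n) u)] with x hn hsucc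
    rw [pow_succ', mul_apply_eq_comp, hsucc, hn, pow_succ', mul_assoc]

lemma LpToLpRestrictCLM_eq_zero_iff {s : Set X} (hs : MeasurableSet s) (u : Lp ℂ 2 ν) :
    LpToLpRestrictCLM X ℂ ℂ ν 2 s u = 0 ↔ ∀ᵐ x ∂ν, x ∈ s → u x = 0 := by
  rw [Lp.eq_zero_iff_ae_eq_zero, ← ae_restrict_iff' hs]
  have hcoe := LpToLpRestrictCLM_coeFn ℂ s u
  exact ⟨fun h => hcoe.symm.trans h, fun h => hcoe.trans h⟩

variable {τ : X → ℝ} {E : Set ℝ} {z : ℂ}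

lemma eq_zero_of_inner_pow_eq_zero (hτ : Measurable τ) (hE : MeasurableSet E)
    (hvol : volume E ≠ 0) (hz : 0 < z.im) {U : Lp ℂ 2 ν →L[ℂ] Lp ℂ 2 ν}
    (hU : ∀ u : Lp ℂ 2 ν, U u =ᵐ[ν] fun x => blaschke z (τ x) * u x) {q : Lp ℂ 2 ν}
    (hqE : ∀ᵐ x ∂ν, τ x ∈ E → q x = 0) (hq : ∀ n : ℕ, ⟪q, (U ^ (n + 1)) q⟫ = 0) : q = 0 := by
  set D : Measure X := ν.withDensity fun x => ENNReal.ofReal (‖q x‖ ^ 2)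
  have hdens : AEMeasurable (fun x => ENNReal.ofReal (‖q x‖ ^ 2)) ν :=
    ((Lp.aestronglyMeasurable q).norm.aemeasurable.pow_const 2).ennreal_ofReal
  have : IsFiniteMeasure D :=
    isFiniteMeasure_withDensity_ofReal ((Lp.memLp q).integrable_norm_pow (by norm_num)).2
  have hmap : D.map τ = 0 := by
    refine measure_eq_zero_of_integral_blaschke_pow hz _ (fun n hn => ?_) hvol ?_
    · obtain ⟨k, rfl⟩ := Nat.exists_eq_succ_of_ne_zero hn
      rw [integral_map hτ.aemeasurable (f := fun t => blaschke z t ^ k.succ)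
        ((continuous_blaschke hz.ne').pow _).aestronglyMeasurable,
        integral_withDensity_eq_integral_toReal_smul₀ hdens
          (ae_of_all _ fun _ => ENNReal.ofReal_lt_top), ← hq k, L2.inner_def]
      refine integral_congr_ae ?_
      filter_upwards [coeFn_pow_of_coeFn hU (k + 1) q] with x hx
      rw [hx, ENNReal.toReal_ofReal (by positivity), RCLike.inner_apply, mul_assoc,
        RCLike.mul_conj, Complex.real_smul, mul_comm]
      simp
    · rw [Measure.map_apply hτ hE, withDensity_apply _ (hτ hE),
        lintegral_eq_zero_iff' hdens.restrict]
      refine (ae_restrict_iff' (hτ hE)).mpr ?_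
      filter_upwards [hqE] with x hx hxE
      simp [hx hxE]
  have hD := (withDensity_eq_zero_iff hdens).mp
    ((Measure.map_eq_zero_iff hτ.aemeasurable).mp hmap)
  rw [Lp.eq_zero_iff_ae_eq_zero]
  filter_upwards [hD] with x hx
  simpa using hx

/-- A function vanishing over a set of positive length is perfectly predictable from its own future
under multiplication by a Blaschke factor, because the innovation `q` has `|q|² ν` projecting to a
multiple of harmonic measure which does not charge `E`. -/
lemma mem_closure_span_blaschke_pow (hτ : Measurable τ) (hE : MeasurableSet E)
    (hvol : volume E ≠ 0) (hz : 0 < z.im) {U : Lp ℂ 2 ν →L[ℂ] Lp ℂ 2 ν}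
    (hU : ∀ u : Lp ℂ 2 ν, U u =ᵐ[ν] fun x => blaschke z (τ x) * u x) {v : Lp ℂ 2 ν}
    (hvE : ∀ᵐ x ∂ν, τ x ∈ E → v x = 0) :
    v ∈ (Submodule.span ℂ (range fun n : ℕ => (U ^ (n + 1)) v)).topologicalClosure := by
  set N := (Submodule.span ℂ (range fun n : ℕ => (U ^ (n + 1)) v)).topologicalClosure
  set R := LpToLpRestrictCLM X ℂ ℂ ν 2 (τ ⁻¹' E)
  have hR (u : Lp ℂ 2 ν) : R u = 0 ↔ ∀ᵐ x ∂ν, τ x ∈ E → u x = 0 :=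
    LpToLpRestrictCLM_eq_zero_iff (hτ hE) u
  have hN : N ≤ LinearMap.ker (R : Lp ℂ 2 ν →ₗ[ℂ] Lp ℂ 2 (ν.restrict (τ ⁻¹' E))) := by
    refine Submodule.topologicalClosure_minimal _ (Submodule.span_le.mpr ?_) R.isClosed_ker
    rintro _ ⟨n, rfl⟩
    refine (hR _).mpr ?_
    filter_upwards [hvE, coeFn_pow_of_coeFn hU (n + 1) v] with x hvx hpow hxE
    rw [hpow, hvx hxE, mul_zero]
  obtain ⟨q, hqN, hq⟩ := exists_sub_mem_closure_span_pow_inner_pow_eq_zero U v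
  have hRq : R q = 0 := by
    have hsub : R (v - q) = 0 := hN hqN
    rwa [map_sub, (hR v).mpr hvE, zero_sub, neg_eq_zero] at hsub
  have hq0 : q = 0 := eq_zero_of_inner_pow_eq_zero hτ hE hvol hz hU ((hR q).mp hRq) hq
  rwa [hq0, sub_zero] at hqN

lemma integrable_resolvent_mul (hτ : Measurable τ) {u : X → ℂ} (hu : Integrable u ν)
    (hz : z.im ≠ 0) : Integrable (fun x => ((τ x : ℂ) - z)⁻¹ * u x) ν :=
  hu.bdd_mul (c := |z.im|⁻¹) (Measurable.aestronglyMeasurable (by fun_prop))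
    (ae_of_all _ fun x => norm_resolvent_le hz (τ x))

lemma continuousAt_integral_resolvent_mul (hτ : Measurable τ) {u : X → ℂ} (hu : Integrable u ν)
    (hz : z.im ≠ 0) : ContinuousAt (fun ζ : ℂ => ∫ x, ((τ x : ℂ) - ζ)⁻¹ * u x ∂ν) z := by
  have hbound : ∀ᶠ ζ in 𝓝 z, |z.im| / 2 < |ζ.im| :=
    Complex.continuous_im.abs.continuousAt.eventually_const_lt (half_lt_self (abs_pos.mpr hz))
  refine continuousAt_of_dominated (bound := fun x => (|z.im| / 2)⁻¹ * ‖u x‖) ?_ ?_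
    (hu.norm.const_mul _) (ae_of_all _ fun x => ?_)
  · exact Eventually.of_forall fun ζ =>
      (Measurable.aestronglyMeasurable (by fun_prop)).mul hu.aestronglyMeasurable
  · filter_upwards [hbound] with ζ hζ
    refine ae_of_all _ fun x => ?_
    rw [norm_mul]
    gcongr
    have him : ζ.im ≠ 0 := abs_pos.mp ((half_pos (abs_pos.mpr hz)).trans hζ)
    exact (norm_resolvent_le him (τ x)).trans
      (inv_anti₀ (half_pos (abs_pos.mpr hz)) hζ.le)
  · exact ((continuousAt_const.sub continuousAt_id).inv₀ (ofReal_sub_ne_zero hz _)).mul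
      continuousAt_const

/-- Partial fractions; the double pole at `ζ = conj z` is reached by continuity. -/
lemma integral_resolvent_blaschke_mul_eq_zero (hτ : Measurable τ) {u : X → ℂ}
    (hu : Integrable u ν) (hz : 0 < z.im)
    (h : ∀ ζ : ℂ, ζ.im < 0 → ∫ x, ((τ x : ℂ) - ζ)⁻¹ * u x ∂ν = 0) {ζ : ℂ} (hζ : ζ.im < 0) :
    ∫ x, ((τ x : ℂ) - ζ)⁻¹ * (blaschke z (τ x) * u x) ∂ν = 0 := by
  have hconj : (conj z).im < 0 := by simpa using hz
  have hsimple {ξ : ℂ} (hξ : ξ.im < 0) (hne : ξ ≠ conj z) :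
      ∫ x, ((τ x : ℂ) - ξ)⁻¹ * (blaschke z (τ x) * u x) ∂ν = 0 := by
    have hfrac (x : X) : ((τ x : ℂ) - ξ)⁻¹ * (blaschke z (τ x) * u x) =
        (ξ - z) / (ξ - conj z) * (((τ x : ℂ) - ξ)⁻¹ * u x) +
          (z - conj z) / (ξ - conj z) * (((τ x : ℂ) - conj z)⁻¹ * u x) := by
      have hτξ := ofReal_sub_ne_zero hξ.ne (τ x)
      have hτz := ofReal_sub_conj_ne_zero hz.ne' (τ x)
      have hξz := sub_ne_zero.mpr hne
      rw [blaschke]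
      field_simp
      ring
    simp_rw [hfrac]
    rw [integral_add ((integrable_resolvent_mul hτ hu hξ.ne).const_mul _)
      ((integrable_resolvent_mul hτ hu hconj.ne).const_mul _), integral_const_mul,
      integral_const_mul, h ξ hξ, h _ hconj, mul_zero, mul_zero, add_zero]
  have hbu : Integrable (fun x => blaschke z (τ x) * u x) ν :=
    hu.bdd_mul (c := 1) ((measurable_blaschke z).comp hτ).aestronglyMeasurable
      (ae_of_all _ fun x => (norm_blaschke hz.ne' _).le)
  rcases ne_or_eq ζ (conj z) with hne | rfl
  · exact hsimple hζ hne
  · have hlim := (continuousAt_integral_resolvent_mul hτ hbu hζ.ne).tendsto.mono_left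
      (nhdsWithin_le_nhds (s := {conj z}ᶜ))
    refine tendsto_nhds_unique_of_eventuallyEq hlim tendsto_const_nhds ?_
    filter_upwards [self_mem_nhdsWithin, nhdsWithin_le_nhds
      (Complex.continuous_im.continuousAt.eventually_lt_const hζ)] with ξ hne hξ
    exact hsimple hξ hne

lemma memLp_resolvent [IsFiniteMeasure ν] (hτ : Measurable τ) (hz : z.im ≠ 0) (p : ℝ≥0∞) :
    MemLp (fun x => ((τ x : ℂ) - z)⁻¹) p ν :=
  .of_bound (Measurable.aestronglyMeasurable (by fun_prop)) |z.im|⁻¹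
    (ae_of_all _ fun x => norm_resolvent_le hz (τ x))

lemma inner_resolvent [IsFiniteMeasure ν] (hτ : Measurable τ) (hz : z.im ≠ 0) (u : Lp ℂ 2 ν) :
    ⟪(memLp_resolvent (ν := ν) hτ hz 2).toLp, u⟫ = ∫ x, ((τ x : ℂ) - conj z)⁻¹ * u x ∂ν := by
  rw [L2.inner_def]
  refine integral_congr_ae ?_
  filter_upwards [(memLp_resolvent (ν := ν) hτ hz 2).coeFn_toLp] with x hx
  rw [hx, RCLike.inner_apply, mul_comm]
  simp

/-- A version of the fact that a function of Hardy class vanishing on a set of positive length is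
zero: the Cauchy integral of `v` over the lower half-plane being zero, the functional
`u ↦ ∫ u / (τ - z)` kills `bⁿ⁺¹ v`, hence also `v`, which is a limit of their combinations. -/
lemma hardy_uniqueness [IsFiniteMeasure ν] (hτ : Measurable τ) (hE : MeasurableSet E)
    (hvol : volume E ≠ 0) {v : Lp ℂ 2 ν} (hvE : ∀ᵐ x ∂ν, τ x ∈ E → v x = 0)
    (h : ∀ ζ : ℂ, ζ.im < 0 → ∫ x, ((τ x : ℂ) - ζ)⁻¹ * v x ∂ν = 0) (hz : 0 < z.im) :
    ∫ x, ((τ x : ℂ) - z)⁻¹ * v x ∂ν = 0 := by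
  have hconj : (conj z).im < 0 := by simpa using hz
  have hb : MemLp (fun x => blaschke z (τ x)) ∞ ν :=
    .of_bound ((measurable_blaschke z).comp hτ).aestronglyMeasurable 1
      (ae_of_all _ fun x => (norm_blaschke hz.ne' _).le)
  set U := mulOp hb.toLp
  have hU : ∀ u : Lp ℂ 2 ν, U u =ᵐ[ν] fun x => blaschke z (τ x) * u x := coeFn_mulOp hb
  have hpow (n : ℕ) : ∀ ζ : ℂ, ζ.im < 0 → ∫ x, ((τ x : ℂ) - ζ)⁻¹ * (U ^ n) v x ∂ν = 0 := by
    induction n with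
    | zero => exact h
    | succ n ih =>
      intro ζ hζ
      rw [← integral_resolvent_blaschke_mul_eq_zero hτ
        ((Lp.memLp ((U ^ n) v)).integrable one_le_two) hz ih hζ, pow_succ']
      exact integral_congr_ae ((hU ((U ^ n) v)).mono fun x hx => congrArg _ hx)
  have hshift (u : Lp ℂ 2 ν) :
      ∫ x, ((τ x : ℂ) - z)⁻¹ * U u x ∂ν = ∫ x, ((τ x : ℂ) - conj z)⁻¹ * u x ∂ν := by
    refine integral_congr_ae ((hU u).mono fun x hx => ?_)
    have hne := ofReal_sub_ne_zero hz.ne' (τ x)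
    simp only [hx, blaschke]
    field_simp
  set r := (memLp_resolvent (ν := ν) hτ hconj.ne 2).toLp
  have hr (u : Lp ℂ 2 ν) : innerSL ℂ r u = ∫ x, ((τ x : ℂ) - z)⁻¹ * u x ∂ν := by
    simpa using inner_resolvent hτ hconj.ne u
  suffices hker : (Submodule.span ℂ (range fun n : ℕ => (U ^ (n + 1)) v)).topologicalClosure ≤
      LinearMap.ker (innerSL ℂ r : Lp ℂ 2 ν →ₗ[ℂ] ℂ) by
    rw [← hr]
    exact hker (mem_closure_span_blaschke_pow hτ hE hvol hz hU hvE)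
  refine Submodule.topologicalClosure_minimal _ (Submodule.span_le.mpr ?_)
    (innerSL ℂ r).isClosed_ker
  rintro _ ⟨n, rfl⟩
  change innerSL ℂ r ((U ^ (n + 1)) v) = 0
  rw [hr, pow_succ', mul_apply_eq_comp, hshift]
  exact hpow n _ hconj

end HardyUniqueness

/-! ### Averaging over the coupling constant -/

lemma one_add_ofReal_mul_ne_zero {F : ℂ} (hF : F.im ≠ 0) (α : ℝ) : 1 + (α : ℂ) * F ≠ 0 := by
  intro h
  have him : α = 0 := by simpa [hF] using congrArg Complex.im h
  simp [him] at h

lemma neg_inv_im_pos {F : ℂ} (hF : 0 < F.im) : 0 < (-F⁻¹).im := by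
  have hF0 : F ≠ 0 := fun h => by simp [h] at hF
  rw [neg_im, inv_im, neg_div, neg_neg]
  exact div_pos hF (normSq_pos.mpr hF0)

lemma div_one_add_mul_im {F : ℂ} (hF : F.im ≠ 0) (α : ℝ) :
    (F / (1 + (α : ℂ) * F)).im = poisson (-F⁻¹) α := by
  have hF0 : F ≠ 0 := fun h => by simp [h] at hF
  rw [← resolvent_im, sub_neg_eq_add]
  congr 1
  field_simp
  ring

lemma harmonicMeasure_I_le_volume : harmonicMeasure I ≤ volume := by
  rw [harmonicMeasure_eq_withDensity (by simp)]
  refine (withDensity_mono (ae_of_all _ fun t => ?_)).trans withDensity_one.le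
  have hnorm : normSq ((t : ℂ) - I) = t ^ 2 + 1 := by simp [normSq_apply, sq]
  rw [Pi.one_apply, ENNReal.ofReal_le_one, poisson, hnorm, I_im]
  exact mul_le_one₀ (inv_le_one_of_one_le₀ (by linarith [Real.pi_gt_three])) (by positivity)
    ((div_le_one (by positivity)).mpr (by nlinarith))

lemma one_sub_mul_blaschke_ne_zero {z c : ℂ} (hz : z.im ≠ 0) (hc : ‖c‖ < 1) (t : ℝ) :
    1 - c * blaschke z t ≠ 0 := fun h => by
  have hnorm := congrArg norm (sub_eq_zero.mp h)
  rw [norm_one, norm_mul, norm_blaschke hz, mul_one] at hnorm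
  exact hc.ne hnorm.symm

lemma integrable_blaschke_pow_mul_inv_one_sub {z c : ℂ} (hz : z.im ≠ 0) (hc : ‖c‖ < 1)
    (m : Measure ℝ) [IsFiniteMeasure m] (n : ℕ) :
    Integrable (fun t => blaschke z t ^ n * (1 - c * blaschke z t)⁻¹) m := by
  have hmeas := measurable_blaschke z
  refine .of_bound (Measurable.aestronglyMeasurable (by fun_prop)) (1 - ‖c‖)⁻¹
    (ae_of_all _ fun t => ?_)
  rw [norm_mul, norm_pow, norm_blaschke hz, one_pow, one_mul, norm_inv]
  refine inv_anti₀ (sub_pos.mpr hc) ?_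
  simpa [norm_blaschke hz] using norm_sub_norm_le 1 (c * blaschke z t)

lemma integral_blaschke_pow_mul_inv_one_sub {z c : ℂ} (hz : 0 < z.im) (hc : ‖c‖ < 1) {n : ℕ}
    (hn : n ≠ 0) :
    ∫ t, blaschke z t ^ n * (1 - c * blaschke z t)⁻¹ ∂(harmonicMeasure z) = 0 := by
  have hterm (k : ℕ) : Integrable (fun t => c ^ k * blaschke z t ^ (k + n)) (harmonicMeasure z) :=
    .of_bound (((measurable_blaschke z).pow_const _).const_mul _).aestronglyMeasurable (‖c‖ ^ k)
      (ae_of_all _ fun t => by simp [norm_blaschke hz.ne'])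
  have hsum := hasSum_integral_of_summable_integral_norm hterm (by
    simpa [norm_blaschke hz.ne'] using summable_geometric_of_lt_one (norm_nonneg c) hc)
  have hpow (k : ℕ) := integral_blaschke_pow_harmonicMeasure hz (show k + n ≠ 0 by omega)
  simp only [integral_const_mul, hpow, mul_zero] at hsum
  rw [← hsum.unique hasSum_zero]
  refine integral_congr_ae (ae_of_all _ fun t => ?_)
  have hgeom := (hasSum_geometric_of_norm_lt_one (ξ := c * blaschke z t) (by
    rwa [norm_mul, norm_blaschke hz.ne', mul_one])).mul_left (blaschke z t ^ n)
  exact hgeom.tsum_eq.symm.trans (tsum_congr fun k => by ring)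

section CouplingIntegral

variable {F : ℂ}

lemma one_add_I_mul_ne_zero (hF : F.im < 0) : 1 + I * F ≠ 0 := fun h => by
  have hre := congrArg Complex.re h
  simp at hre
  linarith

lemma norm_cayley_lt_one (hF : F.im < 0) : ‖(1 - I * F) / (1 + I * F)‖ < 1 := by
  rw [norm_div, div_lt_one (norm_pos_iff.mpr (one_add_I_mul_ne_zero hF)),
    ← sq_lt_sq₀ (norm_nonneg _) (norm_nonneg _), ← normSq_eq_norm_sq, ← normSq_eq_norm_sq]
  simp only [normSq_apply, sub_re, one_re, mul_re, I_re, I_im, sub_im, one_im, mul_im, add_re,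
    add_im]
  linarith

lemma inv_one_add_ofReal_mul (hF : F.im < 0) (α : ℝ) :
    (1 + (α : ℂ) * F)⁻¹ = (1 + I * F)⁻¹ * ((1 - blaschke I α) *
      (1 - (1 - I * F) / (1 + I * F) * blaschke I α)⁻¹) := by
  have hα := one_add_ofReal_mul_ne_zero hF.ne α
  have hI := one_add_I_mul_ne_zero hF
  have hden := one_sub_mul_blaschke_ne_zero (z := I) (by simp) (norm_cayley_lt_one hF) α
  have hconj := ofReal_sub_conj_ne_zero (z := I) (by simp) α
  rw [← mul_assoc, eq_mul_inv_iff_mul_eq₀ hden, inv_mul_eq_iff_eq_mul₀ hα, blaschke]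
  field_simp
  linear_combination (α * F - I * F) * conj_I

lemma integral_blaschke_mul_inv_one_add_eq_zero (hF : F.im < 0) :
    ∫ α : ℝ, blaschke I α * (1 + (α : ℂ) * F)⁻¹ ∂(harmonicMeasure I) = 0 := by
  have hI : 0 < I.im := by simp
  have hc := norm_cayley_lt_one hF
  set c := (1 - I * F) / (1 + I * F)
  have hexpand (α : ℝ) : blaschke I α * (1 + (α : ℂ) * F)⁻¹ = (1 + I * F)⁻¹ *
      (blaschke I α ^ 1 * (1 - c * blaschke I α)⁻¹ -
        blaschke I α ^ 2 * (1 - c * blaschke I α)⁻¹) := by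
    rw [inv_one_add_ofReal_mul hF]
    ring
  simp only [hexpand]
  rw [integral_const_mul, integral_sub (integrable_blaschke_pow_mul_inv_one_sub hI.ne' hc _ 1)
    (integrable_blaschke_pow_mul_inv_one_sub hI.ne' hc _ 2),
    integral_blaschke_pow_mul_inv_one_sub hI hc one_ne_zero,
    integral_blaschke_pow_mul_inv_one_sub hI hc two_ne_zero, sub_zero, mul_zero]

lemma integral_conj_blaschke_mul_inv_one_add (hF : F.im < 0) :
    ∫ α : ℝ, conj (blaschke I α) * (1 + (α : ℂ) * F)⁻¹ ∂(harmonicMeasure I) =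
      -2 * I * F / (1 + I * F) ^ 2 := by
  have hI : 0 < I.im := by simp
  have hIF := one_add_I_mul_ne_zero hF
  have hc := norm_cayley_lt_one hF
  set c := (1 - I * F) / (1 + I * F) with hcdef
  have hexpand (α : ℝ) : conj (blaschke I α) * (1 + (α : ℂ) * F)⁻¹ = (1 + I * F)⁻¹ *
      (conj (blaschke I α ^ 1) + (c - 1) +
        c * (c - 1) * (blaschke I α ^ 1 * (1 - c * blaschke I α)⁻¹)) := by
    have hden := one_sub_mul_blaschke_ne_zero hI.ne' hc α
    have hunit : conj (blaschke I α) * blaschke I α = 1 := by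
      rw [RCLike.conj_mul, norm_blaschke hI.ne']
      simp
    rw [inv_one_add_ofReal_mul hF, mul_left_comm, pow_one]
    congr 1
    rw [← mul_assoc, ← div_eq_mul_inv, div_eq_iff hden, add_mul, mul_assoc _ _ (1 - _),
      inv_mul_cancel_right₀ hden]
    linear_combination (c - 1) * hunit
  have hconj : Integrable (fun α => conj (blaschke I α ^ 1)) (harmonicMeasure I) :=
    .of_bound (Complex.continuous_conj.measurable.comp
      ((measurable_blaschke I).pow_const 1)).aestronglyMeasurable 1
      (ae_of_all _ fun α => by simp [norm_blaschke hI.ne'])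
  have hconst : Integrable (fun α => conj (blaschke I α ^ 1) + (c - 1)) (harmonicMeasure I) :=
    hconj.add (integrable_const _)
  simp only [hexpand]
  rw [integral_const_mul, integral_add hconst
    ((integrable_blaschke_pow_mul_inv_one_sub hI.ne' hc _ 1).const_mul _),
    integral_add hconj (integrable_const _), integral_const_mul, integral_conj,
    integral_blaschke_pow_mul_inv_one_sub hI hc one_ne_zero,
    integral_blaschke_pow_harmonicMeasure hI one_ne_zero, integral_const, probReal_univ, hcdef]
  simp only [map_zero, one_smul, mul_zero, zero_add, add_zero]
  field_simp
  ring

lemma integral_blaschke_mul_inv_one_add_ne_zero (hF : 0 < F.im) :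
    ∫ α : ℝ, blaschke I α * (1 + (α : ℂ) * F)⁻¹ ∂(harmonicMeasure I) ≠ 0 := by
  have hconj : (conj F).im < 0 := by simpa using hF
  have hF0 : conj F ≠ 0 := fun h => by simp [h] at hconj
  have hval := integral_conj_blaschke_mul_inv_one_add hconj
  intro h
  have hzero := congrArg conj h
  simp only [← integral_conj, map_mul, map_inv₀, map_add, map_one, conj_ofReal, map_zero]
    at hzero
  rw [hval] at hzero
  simp [hF0, one_add_I_mul_ne_zero hconj] at hzero

end CouplingIntegral

/-! ### Moments -/

lemma exists_polynomial_tendsto_integral_smul {φ : ℝ → ℝ} (hφ : Continuous φ) (E : Type*)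
    [NormedAddCommGroup E] [NormedSpace ℝ E] :
    ∃ p : ℕ → Polynomial ℝ, ∀ {m : Measure ℝ} {g : ℝ → E}, Integrable g m →
      (∃ r : ℝ, ∀ᵐ t ∂m, |t| ≤ r) →
        Tendsto (fun n => ∫ t, (p n).eval t • g t ∂m) atTop (𝓝 (∫ t, φ t • g t ∂m)) := by
  choose p hp using fun n : ℕ => exists_polynomial_near_of_continuousOn (-n) n φ hφ.continuousOn
    (1 / ((n : ℝ) + 1)) Nat.one_div_pos_of_nat
  refine ⟨p, fun {m g} hg ⟨r, hr⟩ => ?_⟩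
  obtain ⟨C, hC⟩ := isCompact_Icc.exists_bound_of_continuousOn (s := Icc (-r) r) hφ.continuousOn
  have hnear : ∀ᶠ n : ℕ in atTop, ∀ t : ℝ, |t| ≤ r → |(p n).eval t - φ t| < 1 / ((n : ℝ) + 1) := by
    filter_upwards [tendsto_natCast_atTop_atTop.eventually_ge_atTop r] with n hn t ht
    exact hp n t (abs_le.mp (ht.trans hn))
  refine tendsto_integral_filter_of_dominated_convergence (fun t => (1 + C) * ‖g t‖)
    (Eventually.of_forall fun n => (p n).continuous.aestronglyMeasurable.smul
      hg.aestronglyMeasurable) ?_ (hg.norm.const_mul _) ?_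
  · filter_upwards [hnear] with n hn
    filter_upwards [hr] with t ht
    rw [norm_smul]
    gcongr
    calc ‖(p n).eval t‖ ≤ ‖(p n).eval t - φ t‖ + ‖φ t‖ := by
          simpa using norm_add_le ((p n).eval t - φ t) (φ t)
      _ ≤ 1 + C := add_le_add ((hn t ht).le.trans ((div_le_one (by positivity)).mpr (by simp)))
          (hC t (abs_le.mp ht))
  · filter_upwards [hr] with t ht
    refine Tendsto.smul_const (tendsto_iff_norm_sub_tendsto_zero.mpr ?_) _
    refine squeeze_zero' (Eventually.of_forall fun n => norm_nonneg _) ?_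
      (tendsto_one_div_add_atTop_nhds_zero_nat (𝕜 := ℝ))
    filter_upwards [hnear] with n hn
    exact (hn t ht).le

lemma integral_eval_smul {E : Type*} [NormedAddCommGroup E] [NormedSpace ℝ E] {m : Measure ℝ}
    {g : ℝ → E} (hg : Integrable g m) {r : ℝ} (hr : ∀ᵐ t ∂m, |t| ≤ r) (p : Polynomial ℝ) :
    ∫ t, p.eval t • g t ∂m = p.sum fun k a => a • ∫ t, t ^ k • g t ∂m := by
  have hpow (k : ℕ) : Integrable (fun t => t ^ k • g t) m := by
    refine hg.bdd_smul (r ^ k) (by fun_prop) ?_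
    filter_upwards [hr] with t ht
    rw [norm_pow]
    exact pow_le_pow_left₀ (norm_nonneg _) ht k
  simp only [Polynomial.eval_eq_sum, Polynomial.sum, Finset.sum_smul, mul_smul]
  have hterm (k : ℕ) : Integrable (fun t => p.coeff k • t ^ k • g t) m := (hpow k).smul _
  rw [integral_finsetSum _ fun k _ => hterm k]
  simp only [integral_smul]

lemma ae_eq_zero_of_integral_pow_smul_eq_zero {E : Type*} [NormedAddCommGroup E]
    [NormedSpace ℝ E] [CompleteSpace E] {m : Measure ℝ} {g : ℝ → E} (hg : Integrable g m) {r : ℝ}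
    (hr : ∀ᵐ t ∂m, |t| ≤ r) (h : ∀ k : ℕ, ∫ t, t ^ k • g t ∂m = 0) : ∀ᵐ t ∂m, g t = 0 := by
  refine ae_eq_zero_of_integral_contDiff_smul_eq_zero hg.locallyIntegrable fun φ hφ _ => ?_
  obtain ⟨p, hp⟩ := exists_polynomial_tendsto_integral_smul hφ.continuous E
  refine tendsto_nhds_unique (hp hg ⟨r, hr⟩) ?_
  simp [integral_eval_smul hg hr, h, Polynomial.sum]

section MeasurableFamily

variable {β : Type*} [MeasurableSpace β] {m : β → Measure ℝ} [∀ b, IsFiniteMeasure (m b)]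

lemma measurable_integral_of_measurable_integral_pow
    (hm : ∀ b, ∃ r : ℝ, ∀ᵐ t ∂(m b), |t| ≤ r) (h : ∀ k : ℕ, Measurable fun b => ∫ t, t ^ k ∂(m b))
    {φ : ℝ → ℝ} (hφ : Continuous φ) : Measurable fun b => ∫ t, φ t ∂(m b) := by
  obtain ⟨p, hp⟩ := exists_polynomial_tendsto_integral_smul hφ ℝ
  have hlim (b : β) := hp (integrable_const (μ := m b) (1 : ℝ)) (hm b)
  simp only [smul_eq_mul, mul_one] at hlim
  refine measurable_of_tendsto_metrizable (fun n => ?_) (tendsto_pi_nhds.mpr hlim)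
  have heval (b : β) : ∫ t, (p n).eval t ∂(m b) = (p n).sum fun k a => a * ∫ t, t ^ k ∂(m b) := by
    obtain ⟨r, hr⟩ := hm b
    simpa using integral_eval_smul (integrable_const (1 : ℝ)) hr (p n)
  simp only [heval, Polynomial.sum]
  fun_prop

lemma measurable_of_measurable_integral_pow (hm : ∀ b, ∃ r : ℝ, ∀ᵐ t ∂(m b), |t| ≤ r)
    (h : ∀ k : ℕ, Measurable fun b => ∫ t, t ^ k ∂(m b)) : Measurable m := by
  have hlintegral {φ : ℝ → ℝ≥0} (hφ : Continuous φ) {C : ℝ≥0} (hC : ∀ t, φ t ≤ C) :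
      Measurable fun b => ∫⁻ t, φ t ∂(m b) := by
    have hcoe : Continuous fun t => (φ t : ℝ) := NNReal.continuous_coe.comp hφ
    have hint (b : β) : Integrable (fun t => (φ t : ℝ)) (m b) :=
      .of_bound hcoe.aestronglyMeasurable C (ae_of_all _ fun t => by simpa using hC t)
    simp only [lintegral_coe_eq_integral _ (hint _)]
    exact (measurable_integral_of_measurable_integral_pow hm h hcoe).ennreal_ofReal
  refine Measurable.measure_of_isPiSystem (S := {s : Set ℝ | IsClosed s})
    (by rw [BorelSpace.measurable_eq (α := ℝ), borel_eq_generateFrom_isClosed])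
    isPiSystem_isClosed (fun s hs => ?_) ?_
  · have hs : IsClosed s := hs
    exact measurable_of_tendsto_metrizable
      (fun n => hlintegral (hs.apprSeq n).continuous
        (HasOuterApproxClosed.apprSeq_apply_le_one hs n))
      (tendsto_pi_nhds.mpr fun b => HasOuterApproxClosed.tendsto_lintegral_apprSeq hs (m b))
  · simpa using hlintegral (φ := fun _ => 1) continuous_const fun _ => le_rfl

end MeasurableFamily

/-! ### Rank-one perturbations -/

section MultiplicationOperator

variable {X : Type*} [MeasurableSpace X] {ν : Measure X} [IsFiniteMeasure ν]

lemma ae_norm_le_of_opNorm_lt {T : Lp ℂ 2 ν →L[ℂ] Lp ℂ 2 ν} {φ : X → ℂ} (hφ : Measurable φ)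
    (hT : ∀ u : Lp ℂ 2 ν, T u =ᵐ[ν] fun x => φ x * u x) {r : ℝ} (hr : ‖T‖ < r) :
    ∀ᵐ x ∂ν, ‖φ x‖ ≤ r := by
  have hr0 : 0 < r := (norm_nonneg T).trans_lt hr
  have hS : MeasurableSet {x | r < ‖φ x‖} := measurableSet_lt measurable_const hφ.norm
  set u : Lp ℂ 2 ν := indicatorConstLp 2 hS (measure_ne_top ν _) 1
  have hu : u =ᵐ[ν] {x | r < ‖φ x‖}.indicator fun _ => 1 := indicatorConstLp_coeFn
  have hlower : ‖u‖ ≤ r⁻¹ * ‖T u‖ := by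
    refine Lp.norm_le_mul_norm_of_ae_le_mul ?_
    filter_upwards [hT u, hu] with x hTx hux
    rw [hTx, norm_mul, inv_mul_eq_div, le_div_iff₀' hr0]
    by_cases hx : r < ‖φ x‖
    · gcongr
    · simp [hux, hx]
  have hu0 : ‖u‖ = 0 := by
    rw [inv_mul_eq_div, le_div_iff₀' hr0] at hlower
    nlinarith [T.le_opNorm u, norm_nonneg u]
  filter_upwards [Lp.eq_zero_iff_ae_eq_zero.mp (norm_eq_zero.mp hu0), hu] with x hx0 hx
  by_contra! hlt
  simp [hx, hlt] at hx0

end MultiplicationOperator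

lemma ae_tendsto_of_tsum_eLpNorm_rpow_ne_top {X E : Type*} [MeasurableSpace X] {ν : Measure X}
    [NormedAddCommGroup E] {p : ℝ≥0∞} (hp0 : p ≠ 0) (hp : p ≠ ∞) {u : ℕ → X → E} {w : X → E}
    (hu : ∀ n, AEStronglyMeasurable (u n) ν) (hw : AEStronglyMeasurable w ν)
    (h : ∑' n, eLpNorm (u n - w) p ν ^ p.toReal ≠ ∞) :
    ∀ᵐ x ∂ν, Tendsto (fun n => u n x) atTop (𝓝 (w x)) := by
  have hp' : 0 < p.toReal := ENNReal.toReal_pos hp0 hp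
  have hmeas (n : ℕ) : AEMeasurable (fun x => ‖u n x - w x‖ₑ ^ p.toReal) ν :=
    ((hu n).sub hw).enorm.pow_const _
  have hsum : ∫⁻ x, ∑' n, ‖u n x - w x‖ₑ ^ p.toReal ∂ν ≠ ∞ := by
    rw [lintegral_tsum hmeas]
    convert h using 3 with n
    rw [eLpNorm_eq_lintegral_rpow_enorm_toReal hp0 hp, ← ENNReal.rpow_mul,
      one_div_mul_cancel hp'.ne', ENNReal.rpow_one]
    rfl
  filter_upwards [ae_lt_top' (AEMeasurable.tsum hmeas) hsum] with x hx
  rw [tendsto_iff_edist_tendsto_0]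
  have hpow := (ENNReal.tendsto_atTop_zero_of_tsum_ne_top hx.ne).ennrpow_const p.toReal⁻¹
  simpa [edist_eq_enorm_sub, ← ENNReal.rpow_mul, hp'.ne', hp'] using hpow

lemma inner_of_coeFn_eq_one {X : Type*} [MeasurableSpace X] {ν : Measure X} {u : Lp ℂ 2 ν}
    (hu : u =ᵐ[ν] fun _ => 1) (g : Lp ℂ 2 ν) : ⟪u, g⟫ = ∫ x, g x ∂ν := by
  rw [L2.inner_def]
  refine integral_congr_ae ?_
  filter_upwards [hu] with x hx
  simp [hx]

section ResolventVector

variable (μ : Measure ℝ) [IsFiniteMeasure μ] {z : ℂ}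

/-- The function `(t - z)⁻¹` as an element of `L²(μ)`. -/
noncomputable def resolventVector (hz : z.im ≠ 0) : Lp ℂ 2 μ :=
  (memLp_resolvent (ν := μ) measurable_id hz 2).toLp

lemma coeFn_resolventVector (hz : z.im ≠ 0) :
    resolventVector μ hz =ᵐ[μ] fun t => ((t : ℂ) - z)⁻¹ :=
  (memLp_resolvent measurable_id hz 2).coeFn_toLp

lemma inner_resolventVector (hz : z.im ≠ 0) (g : Lp ℂ 2 μ) :
    ⟪resolventVector μ hz, g⟫ = ∫ t, ((t : ℂ) - conj z)⁻¹ * g t ∂μ :=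
  inner_resolvent measurable_id hz g

end ResolventVector

/-- The data of the rank-one perturbation problem: the operators `A α = M_t + α ⟪1, ·⟫ 1` on
`L²(μ)`, the measures `μ_α`, and unitary maps `V α : L²(μ) → L²(μ_α)` which intertwine `A α` with
multiplication by `t` and fix the constant function one. -/
structure RankOneFamily (μ : Measure ℝ) where
  one : Lp ℂ 2 μ
  coeFn_one : one =ᵐ[μ] fun _ => 1
  A : ℝ → (Lp ℂ 2 μ →L[ℂ] Lp ℂ 2 μ)
  coeFn_A : ∀ (α : ℝ) (g : Lp ℂ 2 μ), A α g =ᵐ[μ] fun t => t * g t + (α : ℂ) * ⟪one, g⟫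
  μm : ℝ → Measure ℝ
  V : ∀ α : ℝ, Lp ℂ 2 μ ≃ₗᵢ[ℂ] Lp ℂ 2 (μm α)
  coeFn_V_A : ∀ (α : ℝ) (g : Lp ℂ 2 μ), V α (A α g) =ᵐ[μm α] fun t => t * V α g t
  coeFn_V_one : ∀ α : ℝ, V α one =ᵐ[μm α] fun _ => 1

namespace RankOneFamily

variable {μ : Measure ℝ} (R : RankOneFamily μ)

instance (α : ℝ) : IsFiniteMeasure (R.μm α) := by
  have hone : MemLp (fun _ : ℝ => (1 : ℂ)) 2 (R.μm α) :=
    (memLp_congr_ae (R.coeFn_V_one α)).mp (Lp.memLp _)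
  have htop := (memLp_const_iff two_ne_zero ENNReal.ofNat_ne_top).mp hone
  exact ⟨htop.resolve_left one_ne_zero⟩

lemma A_eq (α : ℝ) (g : Lp ℂ 2 μ) : R.A α g = R.A 0 g + ((α : ℂ) * ⟪R.one, g⟫) • R.one := by
  ext1
  filter_upwards [R.coeFn_A α g, R.coeFn_A 0 g, R.coeFn_one,
    Lp.coeFn_add (R.A 0 g) (((α : ℂ) * ⟪R.one, g⟫) • R.one),
    Lp.coeFn_smul ((α : ℂ) * ⟪R.one, g⟫) R.one] with t hα h0 hone hadd hsmul
  rw [hα, hadd, Pi.add_apply, h0, hsmul, Pi.smul_apply, hone]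
  simp

lemma coeFn_A_zero (g : Lp ℂ 2 μ) : R.A 0 g =ᵐ[μ] fun t => t * g t := by
  simpa using R.coeFn_A 0 g

lemma continuous_A : Continuous R.A := by
  have h : R.A = fun α : ℝ => R.A 0 + (α : ℂ) • (innerSL ℂ R.one).smulRight R.one := by
    funext α
    ext1 g
    rw [R.A_eq α g, mul_smul]
    rfl
  rw [h]
  fun_prop

lemma coeFn_V_A_pow (α : ℝ) (k : ℕ) (g : Lp ℂ 2 μ) :
    R.V α ((R.A α ^ k) g) =ᵐ[R.μm α] fun t => (t : ℂ) ^ k * R.V α g t := by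
  induction k with
  | zero => simp
  | succ k ih =>
    filter_upwards [ih, R.coeFn_V_A α ((R.A α ^ k) g)] with t hk hsucc
    rw [pow_succ', mul_apply_eq_comp, hsucc, hk, pow_succ', mul_assoc]

lemma integral_pow (α : ℝ) (k : ℕ) :
    ∫ t, t ^ k ∂(R.μm α) = (⟪R.one, (R.A α ^ k) R.one⟫).re := by
  have hcoe : R.V α ((R.A α ^ k) R.one) =ᵐ[R.μm α] fun t => ((t ^ k : ℝ) : ℂ) := by
    filter_upwards [R.coeFn_V_A_pow α k R.one, R.coeFn_V_one α] with t hk hone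
    rw [hk, hone, mul_one, ofReal_pow]
  rw [← (R.V α).inner_map_map, inner_of_coeFn_eq_one (R.coeFn_V_one α), integral_congr_ae hcoe,
    integral_complex_ofReal, ofReal_re]

lemma exists_ae_abs_le (α : ℝ) : ∃ r : ℝ, ∀ᵐ t ∂(R.μm α), |t| ≤ r := by
  set T : Lp ℂ 2 (R.μm α) →L[ℂ] Lp ℂ 2 (R.μm α) :=
    (R.V α : Lp ℂ 2 μ →L[ℂ] Lp ℂ 2 (R.μm α)) ∘L R.A α ∘L
      ((R.V α).symm : Lp ℂ 2 (R.μm α) →L[ℂ] Lp ℂ 2 μ)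
  have hT (u : Lp ℂ 2 (R.μm α)) : T u =ᵐ[R.μm α] fun t => (t : ℂ) * u t := by
    simpa [T] using R.coeFn_V_A α ((R.V α).symm u)
  exact ⟨‖T‖ + 1, by
    simpa using ae_norm_le_of_opNorm_lt Complex.measurable_ofReal hT (lt_add_one ‖T‖)⟩

/-- The spectral measures `μ_α` as a kernel in the coupling constant. -/
noncomputable def kernel : Kernel ℝ ℝ where
  toFun := R.μm
  measurable' := measurable_of_measurable_integral_pow R.exists_ae_abs_le fun k => by
    have hA := R.continuous_A
    have hcont : Continuous fun α => (⟪R.one, (R.A α ^ k) R.one⟫).re := by fun_prop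
    simpa only [R.integral_pow] using hcont.measurable

instance : IsFiniteKernel R.kernel :=
  ⟨ENNReal.ofReal (⟪R.one, R.one⟫).re, ENNReal.ofReal_lt_top, fun α => by
    have hmass := R.integral_pow α 0
    simp only [pow_zero, integral_const, smul_eq_mul, mul_one, one_apply_eq_self] at hmass
    rw [← hmass, ofReal_measureReal]
    rfl⟩

variable [IsFiniteMeasure μ]

lemma eq_zero_of_inner_pow_one_eq_zero (g : Lp ℂ 2 μ) (h : ∀ k : ℕ, ⟪(R.A 0 ^ k) R.one, g⟫ = 0) :
    g = 0 := by
  have hr := ae_norm_le_of_opNorm_lt Complex.measurable_ofReal R.coeFn_A_zero (lt_add_one ‖R.A 0‖)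
  simp only [norm_real, Real.norm_eq_abs] at hr
  refine Lp.eq_zero_iff_ae_eq_zero.mpr (ae_eq_zero_of_integral_pow_smul_eq_zero
    ((Lp.memLp g).integrable one_le_two) hr fun k => ?_)
  rw [← h k, L2.inner_def]
  refine integral_congr_ae ?_
  filter_upwards [coeFn_pow_of_coeFn R.coeFn_A_zero k R.one, R.coeFn_one] with t hk hone
  rw [RCLike.inner_apply, hk, hone]
  simp [mul_comm]

lemma eq_top_of_invariant {T : Submodule ℂ (Lp ℂ 2 μ)} (hT : IsClosed (T : Set (Lp ℂ 2 μ)))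
    (hone : R.one ∈ T) (hA : ∀ g ∈ T, R.A 0 g ∈ T) : T = ⊤ := by
  have : CompleteSpace T := hT.completeSpace_coe
  have hpow (k : ℕ) : (R.A 0 ^ k) R.one ∈ T := by
    induction k with
    | zero => exact hone
    | succ k ih =>
      rw [pow_succ']
      exact hA _ ih
  rw [← Submodule.orthogonal_eq_bot_iff, Submodule.eq_bot_iff]
  exact fun g hg => R.eq_zero_of_inner_pow_one_eq_zero g fun k => hg _ (hpow k)

end RankOneFamily

/-! ### Joint measurability and resolvents -/

namespace RankOneFamily

variable {μ : Measure ℝ} (R : RankOneFamily μ)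

/-- The vectors `g` for which `(α, t) ↦ (V α g) t` has a jointly measurable version. -/
def jointlyMeasurable : Submodule ℂ (Lp ℂ 2 μ) where
  carrier := {g | ∃ P : ℝ × ℝ → ℂ, Measurable P ∧ ∀ α, R.V α g =ᵐ[R.μm α] fun t => P (α, t)}
  zero_mem' := ⟨0, measurable_zero, fun α => by
    rw [map_zero]
    exact Lp.coeFn_zero _ _ _⟩
  add_mem' := by
    rintro g h ⟨P, hP, hPg⟩ ⟨Q, hQ, hQh⟩
    refine ⟨P + Q, hP.add hQ, fun α => ?_⟩
    rw [map_add]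
    filter_upwards [Lp.coeFn_add (R.V α g) (R.V α h), hPg α, hQh α] with t hadd hgt hht
    rw [hadd, Pi.add_apply, hgt, hht, Pi.add_apply]
  smul_mem' := by
    rintro c g ⟨P, hP, hPg⟩
    refine ⟨c • P, hP.const_smul c, fun α => ?_⟩
    rw [map_smul]
    filter_upwards [Lp.coeFn_smul c (R.V α g), hPg α] with t hsmul hgt
    rw [hsmul, Pi.smul_apply, hgt, Pi.smul_apply]

lemma isClosed_jointlyMeasurable : IsClosed (R.jointlyMeasurable : Set (Lp ℂ 2 μ)) := by
  refine isClosed_of_closure_subset fun g hg => ?_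
  have happrox (n : ℕ) : ∃ h ∈ R.jointlyMeasurable, edist g h < (2⁻¹ : ℝ≥0∞) ^ n :=
    EMetric.mem_closure_iff.mp hg _ (ENNReal.pow_pos (by simp) n)
  choose h hmem hdist using happrox
  choose P hP hPh using hmem
  refine ⟨fun x => limUnder atTop fun n => P n x,
    (StronglyMeasurable.limUnder fun n => (hP n).stronglyMeasurable).measurable, fun α => ?_⟩
  have hsum : ∑' n, eLpNorm (R.V α (h n) - R.V α g : ℝ → ℂ) 2 (R.μm α) ^ (2 : ℝ≥0∞).toReal ≠ ∞ := by
    refine ne_top_of_le_ne_top (b := ∑' n, (2⁻¹ : ℝ≥0∞) ^ n) (by simp)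
      (ENNReal.tsum_le_tsum fun n => ?_)
    have hle : eLpNorm (R.V α (h n) - R.V α g : ℝ → ℂ) 2 (R.μm α) ≤ 2⁻¹ ^ n := by
      rw [← Lp.edist_def, (R.V α).edist_map, edist_comm]
      exact (hdist n).le
    calc _ ≤ ((2⁻¹ : ℝ≥0∞) ^ n) ^ (2 : ℝ≥0∞).toReal := by gcongr
      _ ≤ 2⁻¹ ^ n := ENNReal.rpow_le_self_of_le_one (pow_le_one₀ zero_le (by simp)) (by norm_num)
  filter_upwards [ae_tendsto_of_tsum_eLpNorm_rpow_ne_top two_ne_zero ENNReal.ofNat_ne_top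
    (fun n => Lp.aestronglyMeasurable (R.V α (h n))) (Lp.aestronglyMeasurable (R.V α g)) hsum,
    ae_all_iff.mpr fun n => hPh n α] with t hlim hPt
  simp_rw [hPt] at hlim
  exact hlim.limUnder_eq.symm

variable [IsFiniteMeasure μ]

lemma exists_jointly_measurable (g : Lp ℂ 2 μ) :
    ∃ P : ℝ × ℝ → ℂ, Measurable P ∧ ∀ α, R.V α g =ᵐ[R.μm α] fun t => P (α, t) := by
  suffices htop : R.jointlyMeasurable = ⊤ from htop.ge (Submodule.mem_top (x := g))
  refine R.eq_top_of_invariant R.isClosed_jointlyMeasurable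
    ⟨fun _ => 1, measurable_const, R.coeFn_V_one⟩ ?_
  rintro g ⟨P, hP, hPg⟩
  refine ⟨fun x => x.2 * P x - (x.1 : ℂ) * ⟪R.one, g⟫, by fun_prop, fun α => ?_⟩
  have hA := R.coeFn_V_A α g
  rw [R.A_eq α g, map_add, map_smul] at hA
  filter_upwards [hA, hPg α, R.coeFn_V_one α,
    Lp.coeFn_add (R.V α (R.A 0 g)) (((α : ℂ) * ⟪R.one, g⟫) • R.V α R.one),
    Lp.coeFn_smul ((α : ℂ) * ⟪R.one, g⟫) (R.V α R.one)] with t hA hgt hone hadd hsmul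
  rw [hadd, Pi.add_apply, hsmul, Pi.smul_apply, hone, hgt] at hA
  simp only [smul_eq_mul] at hA
  linear_combination hA

lemma A_resolventVector (α : ℝ) {z : ℂ} (hz : z.im ≠ 0) :
    R.A α (resolventVector μ hz) =
      z • resolventVector μ hz + (1 + α * cauchyTransform μ z) • R.one := by
  have hinner : ⟪R.one, resolventVector μ hz⟫ = cauchyTransform μ z :=
    (inner_of_coeFn_eq_one R.coeFn_one _).trans (integral_congr_ae (coeFn_resolventVector μ hz))
  ext1
  filter_upwards [R.coeFn_A α (resolventVector μ hz), coeFn_resolventVector μ hz, R.coeFn_one,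
    Lp.coeFn_add (z • resolventVector μ hz) ((1 + α * cauchyTransform μ z) • R.one),
    Lp.coeFn_smul z (resolventVector μ hz), Lp.coeFn_smul (1 + α * cauchyTransform μ z) R.one]
    with t hA hres hone hadd hsmul hsmul_one
  have ht := ofReal_sub_ne_zero hz t
  rw [hA, hadd, Pi.add_apply, hsmul, hsmul_one, Pi.smul_apply, Pi.smul_apply, hone, hres, hinner]
  simp only [smul_eq_mul]
  field_simp
  ring

lemma coeFn_V_resolventVector (α : ℝ) {z : ℂ} (hz : z.im ≠ 0) :
    R.V α (resolventVector μ hz) =ᵐ[R.μm α]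
      fun t => (1 + α * cauchyTransform μ z) * ((t : ℂ) - z)⁻¹ := by
  have hA := R.coeFn_V_A α (resolventVector μ hz)
  rw [R.A_resolventVector α hz, map_add, map_smul, map_smul] at hA
  filter_upwards [hA, R.coeFn_V_one α,
    Lp.coeFn_add (z • R.V α (resolventVector μ hz))
      ((1 + α * cauchyTransform μ z) • R.V α R.one),
    Lp.coeFn_smul z (R.V α (resolventVector μ hz)),
    Lp.coeFn_smul (1 + α * cauchyTransform μ z) (R.V α R.one)]
    with t hA hone hadd hsmul hsmul_one
  rw [hadd, Pi.add_apply, hsmul, hsmul_one, Pi.smul_apply, Pi.smul_apply, hone] at hA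
  simp only [smul_eq_mul] at hA
  rw [← div_eq_mul_inv, eq_div_iff (ofReal_sub_ne_zero hz t)]
  linear_combination -hA

lemma aronszajn_krein (α : ℝ) {z : ℂ} (hz : z.im ≠ 0) (g : Lp ℂ 2 μ) :
    (1 + α * cauchyTransform μ z) * ∫ t, ((t : ℂ) - z)⁻¹ * R.V α g t ∂(R.μm α) =
      ∫ t, ((t : ℂ) - z)⁻¹ * g t ∂μ := by
  have hz' : (conj z).im ≠ 0 := by simpa using hz
  calc (1 + α * cauchyTransform μ z) * ∫ t, ((t : ℂ) - z)⁻¹ * R.V α g t ∂(R.μm α)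
      = ⟪R.V α (resolventVector μ hz'), R.V α g⟫ := by
        rw [← integral_const_mul, L2.inner_def]
        refine integral_congr_ae ?_
        filter_upwards [R.coeFn_V_resolventVector α hz'] with t ht
        rw [RCLike.inner_apply, ht, cauchyTransform_conj]
        simp only [map_mul, map_add, map_one, conj_ofReal, conj_conj, map_inv₀, map_sub]
        ring
    _ = ⟪resolventVector μ hz', g⟫ := (R.V α).inner_map_map _ _
    _ = ∫ t, ((t : ℂ) - z)⁻¹ * g t ∂μ := by rw [inner_resolventVector, conj_conj]

lemma cauchyTransform_eq (hμ : μ ≠ 0) (α : ℝ) {z : ℂ} (hz : z.im ≠ 0) :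
    cauchyTransform (R.μm α) z = cauchyTransform μ z / (1 + α * cauchyTransform μ z) := by
  have hα : cauchyTransform (R.μm α) z = ∫ t, ((t : ℂ) - z)⁻¹ * R.V α R.one t ∂(R.μm α) := by
    refine integral_congr_ae ?_
    filter_upwards [R.coeFn_V_one α] with t hone
    rw [hone, mul_one]
  have h0 : cauchyTransform μ z = ∫ t, ((t : ℂ) - z)⁻¹ * R.one t ∂μ := by
    refine integral_congr_ae ?_
    filter_upwards [R.coeFn_one] with t hone
    rw [hone, mul_one]
  rw [eq_div_iff (one_add_ofReal_mul_ne_zero (cauchyTransform_im_ne_zero μ hμ hz) α), mul_comm,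
    hα, R.aronszajn_krein α hz, ← h0]

lemma norm_resolventVector_le {z : ℂ} (hz : z.im ≠ 0) :
    ‖resolventVector μ hz‖ ≤ |z.im|⁻¹ * ‖R.one‖ := by
  refine Lp.norm_le_mul_norm_of_ae_le_mul ?_
  filter_upwards [coeFn_resolventVector μ hz, R.coeFn_one] with t hres hone
  rw [hres, hone, norm_one, mul_one]
  exact norm_resolvent_le hz t

lemma A_zero_resolventVector {z : ℂ} (hz : z.im ≠ 0) :
    R.A 0 (resolventVector μ hz) = z • resolventVector μ hz + R.one := by
  simpa using R.A_resolventVector 0 hz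

-- As `z → -i∞`, the vectors `-z (t - z)⁻¹` converge to `1`.
lemma one_mem_closure_span_resolventVector :
    R.one ∈ (Submodule.span ℂ
      {h | ∃ (z : ℂ) (hz : z.im < 0), h = resolventVector μ hz.ne}).topologicalClosure := by
  have hlim : Tendsto (fun n : ℕ => ‖R.A 0‖ * ((n + 1 : ℝ)⁻¹ * ‖R.one‖)) atTop (𝓝 0) := by
    simpa using ((tendsto_inv_atTop_zero.comp
      (tendsto_atTop_add_const_right _ (1 : ℝ) tendsto_natCast_atTop_atTop)).mul_const
      ‖R.one‖).const_mul ‖R.A 0‖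
  have him (n : ℕ) : (-((n + 1 : ℝ) * I)).im = -(n + 1) := by simp [add_comm]
  have hz (n : ℕ) : (-((n + 1 : ℝ) * I)).im < 0 := by
    rw [him, neg_lt_zero]
    positivity
  refine mem_closure_of_tendsto (b := atTop) (f := fun n : ℕ =>
    R.one - R.A 0 (resolventVector μ (hz n).ne)) ?_ (Eventually.of_forall fun n => ?_)
  · rw [tendsto_iff_norm_sub_tendsto_zero]
    refine squeeze_zero (fun _ => norm_nonneg _) (fun n => ?_) hlim
    rw [sub_sub_cancel_left, norm_neg]
    exact (R.A 0).le_opNorm_of_le ((R.norm_resolventVector_le (hz n).ne).trans_eq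
      (by rw [him, abs_neg, abs_of_pos (by positivity)]))
  · rw [R.A_zero_resolventVector, sub_add_cancel_right, ← neg_smul]
    exact Submodule.smul_mem _ _ (Submodule.subset_span ⟨_, hz n, rfl⟩)

lemma eq_zero_of_integral_resolvent_mul_eq_zero (R : RankOneFamily μ) (g : Lp ℂ 2 μ)
    (h : ∀ z : ℂ, 0 < z.im → ∫ t, ((t : ℂ) - z)⁻¹ * g t ∂μ = 0) : g = 0 := by
  set S := {h | ∃ (z : ℂ) (hz : z.im < 0), h = resolventVector μ hz.ne}
  have hone := R.one_mem_closure_span_resolventVector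
  have htop : (Submodule.span ℂ S).topologicalClosure = ⊤ := by
    refine R.eq_top_of_invariant (Submodule.span ℂ S).isClosed_topologicalClosure hone
      (topologicalClosure_span_le_comap (R.A 0) ?_)
    rintro _ ⟨z, hz, rfl⟩
    rw [R.A_zero_resolventVector]
    exact add_mem (Submodule.smul_mem _ _ (Submodule.le_topologicalClosure _
      (Submodule.subset_span ⟨z, hz, rfl⟩))) hone
  have hle : (Submodule.span ℂ S).topologicalClosure ≤ (ℂ ∙ g)ᗮ := by
    refine Submodule.topologicalClosure_minimal _ (Submodule.span_le.mpr ?_)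
      (Submodule.isClosed_orthogonal _)
    rintro _ ⟨z, hz, rfl⟩
    rw [SetLike.mem_coe, Submodule.mem_orthogonal_singleton_iff_inner_left, inner_resolventVector]
    exact h _ (by simpa using hz)
  have hg : g ∈ (ℂ ∙ g)ᗮ := hle (htop ▸ Submodule.mem_top)
  rwa [Submodule.mem_orthogonal_singleton_iff_inner_left, inner_self_eq_zero] at hg

end RankOneFamily

/-! ### The joint measure -/

lemma memLp_compProd_of_eLpNorm_le {X Y E : Type*} [MeasurableSpace X] [MeasurableSpace Y]
    [NormedAddCommGroup E] {ω : Measure X} [IsFiniteMeasure ω] {κ : Kernel X Y} [IsSFiniteKernel κ]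
    {p C : ℝ≥0∞} (hp0 : p ≠ 0) (hp : p ≠ ∞) (hC : C ≠ ∞) {P : X × Y → E} (hP : StronglyMeasurable P)
    (h : ∀ x, eLpNorm (fun y => P (x, y)) p (κ x) ≤ C) : MemLp P p (ω ⊗ₘ κ) := by
  refine ⟨hP.aestronglyMeasurable, ?_⟩
  have hmeas : Measurable fun a => ‖P a‖ₑ ^ p.toReal := hP.enorm.pow_const _
  rw [eLpNorm_lt_top_iff_lintegral_rpow_enorm_lt_top hp0 hp, Measure.lintegral_compProd hmeas]
  have hfiber (x : X) : ∫⁻ y, ‖P (x, y)‖ₑ ^ p.toReal ∂(κ x) ≤ C ^ p.toReal := by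
    rw [← ENNReal.rpow_le_rpow_iff (inv_pos.mpr (ENNReal.toReal_pos hp0 hp)),
      ENNReal.rpow_rpow_inv (ENNReal.toReal_pos hp0 hp).ne', ← one_div,
      ← eLpNorm_eq_lintegral_rpow_enorm_toReal hp0 hp]
    exact h x
  refine (lintegral_mono hfiber).trans_lt ?_
  rw [lintegral_const]
  exact ENNReal.mul_lt_top (ENNReal.rpow_lt_top_of_nonneg ENNReal.toReal_nonneg hC)
    (measure_lt_top _ _)

namespace RankOneFamily

variable {μ : Measure ℝ} (R : RankOneFamily μ)

/-- The measure `dω(α) dμ_α(t)` on pairs `(α, t)`, where the law `ω` of the coupling constant is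
harmonic measure at `i`, that is, `π⁻¹ (1 + α²)⁻¹ dα`. -/
noncomputable def jointMeasure : Measure (ℝ × ℝ) := harmonicMeasure I ⊗ₘ R.kernel

instance : IsFiniteMeasure R.jointMeasure := by
  unfold jointMeasure
  infer_instance

lemma memLp_blaschke_mul {g : Lp ℂ 2 μ} {P : ℝ × ℝ → ℂ} (hP : Measurable P)
    (hPg : ∀ α, R.V α g =ᵐ[R.μm α] fun t => P (α, t)) :
    MemLp (fun x => blaschke I x.1 * P x) 2 R.jointMeasure := by
  have hmeas : Measurable fun x : ℝ × ℝ => blaschke I x.1 * P x :=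
    ((measurable_blaschke I).comp measurable_fst).mul hP
  have hfiber (α : ℝ) : eLpNorm (fun t => P (α, t)) 2 (R.kernel α) ≤ ‖g‖ₑ := by
    change eLpNorm _ 2 (R.μm α) ≤ _
    rw [← eLpNorm_congr_ae (hPg α), ← Lp.enorm_def, (R.V α).enorm_map]
  refine (memLp_compProd_of_eLpNorm_le two_ne_zero ENNReal.ofNat_ne_top enorm_ne_top
    hP.stronglyMeasurable hfiber).of_le hmeas.aestronglyMeasurable (ae_of_all _ fun x => ?_)
  rw [norm_mul, norm_blaschke (by simp), one_mul]

variable [IsFiniteMeasure μ]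

lemma integral_resolvent_mul_jointMeasure (hμ : μ ≠ 0) {g : Lp ℂ 2 μ} {P : ℝ × ℝ → ℂ}
    (hP : Measurable P) (hPg : ∀ α, R.V α g =ᵐ[R.μm α] fun t => P (α, t)) {z : ℂ}
    (hz : z.im ≠ 0) :
    ∫ x, ((x.2 : ℂ) - z)⁻¹ * (blaschke I x.1 * P x) ∂(R.jointMeasure) =
      (∫ α : ℝ, blaschke I α * (1 + (α : ℂ) * cauchyTransform μ z)⁻¹ ∂harmonicMeasure I) *
        ∫ t, ((t : ℂ) - z)⁻¹ * g t ∂μ := by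
  have hint : Integrable (fun x : ℝ × ℝ => ((x.2 : ℂ) - z)⁻¹ * (blaschke I x.1 * P x))
      R.jointMeasure :=
    ((R.memLp_blaschke_mul hP hPg).integrable one_le_two).bdd_mul (by fun_prop)
      (ae_of_all _ fun x => norm_resolvent_le hz x.2)
  rw [jointMeasure, Measure.integral_compProd hint, ← integral_mul_const]
  refine integral_congr_ae (ae_of_all _ fun α => ?_)
  have hfiber : ∫ t, ((t : ℂ) - z)⁻¹ * (blaschke I α * P (α, t)) ∂(R.kernel α) =
      blaschke I α * ∫ t, ((t : ℂ) - z)⁻¹ * R.V α g t ∂(R.μm α) := by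
    rw [← integral_const_mul]
    refine integral_congr_ae ?_
    filter_upwards [hPg α] with t ht
    rw [ht, mul_left_comm]
  have hF := one_add_ofReal_mul_ne_zero (cauchyTransform_im_ne_zero μ hμ hz) α
  dsimp only
  rw [hfiber, ← R.aronszajn_krein α hz g, mul_assoc, inv_mul_cancel_left₀ hF]

lemma measure_closedBall_le_poisson (hμ : μ ≠ 0) (α x : ℝ) {r : ℝ} (hr : 0 < r) :
    R.μm α (Metric.closedBall x r) ≤
      ENNReal.ofReal (2 * r) * ENNReal.ofReal (poisson (-(cauchyTransform μ (x + r * I))⁻¹) α) := by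
  have hz : ((x : ℂ) + r * I).im ≠ 0 := by simpa using hr.ne'
  rw [← ENNReal.ofReal_mul (by positivity), ← ofReal_measureReal,
    ← div_one_add_mul_im (cauchyTransform_im_ne_zero μ hμ hz), ← R.cauchyTransform_eq hμ α hz]
  exact ENNReal.ofReal_le_ofReal (measure_closedBall_le (R.μm α) x hr)

lemma map_snd_jointMeasure_absolutelyContinuous (hμ : μ ≠ 0) :
    R.jointMeasure.map Prod.snd ≪ volume := by
  refine absolutelyContinuous_of_closedBall_le _ (C := ENNReal.ofReal Real.pi)
    ENNReal.ofReal_ne_top fun x r hr => ?_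
  have hz : 0 < ((x : ℂ) + r * I).im := by simpa using hr
  have hw := neg_inv_im_pos (cauchyTransform_im_pos μ hμ hz)
  set w := -(cauchyTransform μ (x + r * I))⁻¹
  have hball : MeasurableSet (Metric.closedBall x r) := measurableSet_closedBall
  rw [Measure.map_apply measurable_snd hball, jointMeasure,
    Measure.compProd_apply (measurable_snd hball)]
  calc ∫⁻ α, R.μm α (Metric.closedBall x r) ∂harmonicMeasure I
      ≤ ∫⁻ α, R.μm α (Metric.closedBall x r) := lintegral_mono' harmonicMeasure_I_le_volume le_rfl
    _ ≤ ∫⁻ α, ENNReal.ofReal (2 * r) * ENNReal.ofReal (poisson w α) :=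
        lintegral_mono fun α => R.measure_closedBall_le_poisson hμ α x hr
    _ = ENNReal.ofReal Real.pi * volume (Metric.closedBall x r) := by
        rw [lintegral_const_mul' _ _ ENNReal.ofReal_ne_top,
          ← ofReal_integral_eq_lintegral_ofReal (integrable_poisson_volume hw)
            (ae_of_all _ fun α => (poisson_pos hw α).le),
          integral_poisson_volume hw, Real.volume_closedBall, mul_comm]

lemma ae_measure_eq_zero_of_volume_eq_zero (hμ : μ ≠ 0) {E : Set ℝ} (hE : MeasurableSet E)
    (h : volume E = 0) : ∀ᵐ α : ℝ, R.μm α E = 0 := by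
  have hjoint := R.map_snd_jointMeasure_absolutelyContinuous hμ h
  rw [Measure.map_apply measurable_snd hE, jointMeasure] at hjoint
  refine (volume_absolutelyContinuous_harmonicMeasure (z := I) (by simp)).ae_le ?_
  filter_upwards [Measure.ae_ae_of_ae_compProd (measure_eq_zero_iff_ae_notMem.mp hjoint)] with α hα
  exact measure_eq_zero_iff_ae_notMem.mpr hα

/-! ### Boundary values -/

lemma ae_neg_inv_eq_of_tendsto_cauchyTransform (hμ : μ ≠ 0) (α : ℝ) :
    ∀ᵐ t : ℝ ∂(R.μm α), ∀ a : ℝ, a ≠ 0 →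
      Tendsto (fun n => cauchyTransform μ (t + height n * I)) atTop (𝓝 (a : ℂ)) → -a⁻¹ = α := by
  filter_upwards [ae_not_tendsto_cauchyTransform_im_zero (R.μm α)] with t ht a ha hlim
  by_contra hne
  have hden : 1 + α * a ≠ 0 := fun h => hne (by field_simp; linarith)
  have hα : Tendsto (fun n => cauchyTransform (R.μm α) (t + height n * I)) atTop
      (𝓝 ((a / (1 + α * a) : ℝ) : ℂ)) := by
    push_cast
    refine (hlim.div ((hlim.const_mul (α : ℂ)).const_add 1)
      (by exact_mod_cast hden)).congr fun n => ?_
    exact (R.cauchyTransform_eq hμ α (by simpa using (height_pos n).ne')).symm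
  have him := (continuous_im.tendsto _).comp hα
  rw [ofReal_im] at him
  exact ht him

lemma singularPart_ae_tendsto_neg_inv (hμ : μ ≠ 0) {α : ℝ} (hα : α ≠ 0) :
    ∀ᵐ t : ℝ ∂((R.μm α).singularPart volume),
      Tendsto (fun n => cauchyTransform μ (t + height n * I)) atTop (𝓝 ((-α⁻¹ : ℝ) : ℂ)) := by
  filter_upwards [singularPart_ae_tendsto_cauchyTransform_im (R.μm α)] with t ht
  have hnorm : Tendsto (fun n => ‖cauchyTransform (R.μm α) (t + height n * I)‖) atTop atTop :=
    tendsto_atTop_mono (fun n => (le_abs_self _).trans (abs_im_le_norm _)) ht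
  have hinv : Tendsto (fun n => (cauchyTransform (R.μm α) (t + height n * I))⁻¹) atTop (𝓝 0) :=
    tendsto_inv₀_cobounded.comp (tendsto_norm_atTop_iff_cobounded.mp hnorm)
  have hlim := (hinv.sub_const (α : ℂ)).inv₀ (by simpa using hα)
  rw [zero_sub, inv_neg] at hlim
  push_cast
  refine hlim.congr fun n => ?_
  have hz : ((t : ℂ) + height n * I).im ≠ 0 := by simpa using (height_pos n).ne'
  have hF0 : cauchyTransform μ (t + height n * I) ≠ 0 := fun h =>
    cauchyTransform_im_ne_zero μ hμ hz (by simp [h])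
  rw [R.cauchyTransform_eq hμ α hz, inv_div, add_div, mul_div_cancel_right₀ _ hF0,
    add_sub_cancel_right, one_div, inv_inv]

end RankOneFamily

lemma measurable_cauchyTransform_add_mul_I (m : Measure ℝ) [SFinite m] (y : ℝ) :
    Measurable fun t : ℝ => cauchyTransform m (t + y * I) := by
  have hmeas : Measurable fun x : ℝ × ℝ => ((x.2 : ℂ) - (x.1 + y * I))⁻¹ := by fun_prop
  exact hmeas.stronglyMeasurable.integral_prod_right.measurable

/-- The real part of the boundary value of the Cauchy transform of `m` at `t`, along the vertical
approach `t + i (n + 1)⁻¹`; a junk value where there is no limit. -/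
noncomputable def boundaryValue (m : Measure ℝ) (t : ℝ) : ℝ :=
  (limUnder atTop fun n => cauchyTransform m (t + height n * I)).re

lemma measurable_boundaryValue (m : Measure ℝ) [SFinite m] : Measurable (boundaryValue m) :=
  measurable_re.comp (StronglyMeasurable.limUnder fun n =>
    (measurable_cauchyTransform_add_mul_I m (height n)).stronglyMeasurable).measurable

lemma boundaryValue_eq {m : Measure ℝ} {t a : ℝ}
    (h : Tendsto (fun n => cauchyTransform m (t + height n * I)) atTop (𝓝 (a : ℂ))) :
    boundaryValue m t = a := by
  rw [boundaryValue, h.limUnder_eq, ofReal_re]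

/-- The points `t` at which the Cauchy transform of `m` has a real boundary value `a ≠ 0` with
`P (-1 / a, t) = 0`. For `P (α, t) = (V α f) t`, these are the zeros of the functions `V α f` at
the only coupling constants `α` whose spectral measure can have a singular part near `t`. -/
def exceptionalSet (m : Measure ℝ) (P : ℝ × ℝ → ℂ) : Set ℝ :=
  {t | Tendsto (fun n => cauchyTransform m (t + height n * I)) atTop (𝓝 (boundaryValue m t : ℂ)) ∧
    boundaryValue m t ≠ 0 ∧ P (-(boundaryValue m t)⁻¹, t) = 0}

lemma measurableSet_exceptionalSet (m : Measure ℝ) [SFinite m] {P : ℝ × ℝ → ℂ}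
    (hP : Measurable P) : MeasurableSet (exceptionalSet m P) := by
  have ha := measurable_boundaryValue m
  have hPa : Measurable fun t => P (-(boundaryValue m t)⁻¹, t) := by fun_prop
  exact (measurableSet_tendsto_fun (fun n => measurable_cauchyTransform_add_mul_I m (height n))
    (measurable_ofReal.comp ha)).inter
      ((ha (measurableSet_singleton 0).compl).inter (hPa (measurableSet_singleton 0)))

namespace RankOneFamily

variable {μ : Measure ℝ} [IsFiniteMeasure μ] (R : RankOneFamily μ)

lemma ae_eq_zero_of_mem_exceptionalSet (hμ : μ ≠ 0) (P : ℝ × ℝ → ℂ) (α : ℝ) :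
    ∀ᵐ t ∂(R.μm α), t ∈ exceptionalSet μ P → P (α, t) = 0 := by
  filter_upwards [R.ae_neg_inv_eq_of_tendsto_cauchyTransform hμ α] with t ht ⟨hlim, ha, hPt⟩
  rwa [ht _ ha hlim] at hPt

lemma volume_exceptionalSet (hμ : μ ≠ 0) {g : Lp ℂ 2 μ} (hg : g ≠ 0) {P : ℝ × ℝ → ℂ}
    (hP : Measurable P) (hPg : ∀ α, R.V α g =ᵐ[R.μm α] fun t => P (α, t)) :
    volume (exceptionalSet μ P) = 0 := by
  by_contra hvol
  have hE := measurableSet_exceptionalSet μ hP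
  have hv := (R.memLp_blaschke_mul hP hPg).coeFn_toLp
  set v := (R.memLp_blaschke_mul hP hPg).toLp
  have hvanish : ∀ᵐ x ∂(R.jointMeasure), x.2 ∈ exceptionalSet μ P → P x = 0 := by
    have hmeas : MeasurableSet {x : ℝ × ℝ | x.2 ∈ exceptionalSet μ P → P x = 0} :=
      (measurable_snd hE).imp (hP (measurableSet_singleton 0))
    exact (Measure.ae_compProd_iff hmeas).mpr
      (ae_of_all _ fun α => R.ae_eq_zero_of_mem_exceptionalSet hμ P α)
  have hvE : ∀ᵐ x ∂(R.jointMeasure), x.2 ∈ exceptionalSet μ P → v x = 0 := by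
    filter_upwards [hv, hvanish] with x hx hPx hxE
    rw [hx, hPx hxE, mul_zero]
  have hcauchy {z : ℂ} (hz : z.im ≠ 0) :
      ∫ x, ((x.2 : ℂ) - z)⁻¹ * v x ∂(R.jointMeasure) =
        (∫ α : ℝ, blaschke I α * (1 + (α : ℂ) * cauchyTransform μ z)⁻¹ ∂harmonicMeasure I) *
          ∫ t, ((t : ℂ) - z)⁻¹ * g t ∂μ := by
    rw [← R.integral_resolvent_mul_jointMeasure hμ hP hPg hz]
    refine integral_congr_ae ?_
    filter_upwards [hv] with x hx
    rw [hx]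
  refine hg (R.eq_zero_of_integral_resolvent_mul_eq_zero g fun z hz => ?_)
  have hupper := hardy_uniqueness measurable_snd hE hvol hvE (fun ζ hζ => by
    rw [hcauchy hζ.ne, integral_blaschke_mul_inv_one_add_eq_zero (cauchyTransform_im_neg μ hμ hζ),
      zero_mul]) hz
  rw [hcauchy hz.ne'] at hupper
  exact (mul_eq_zero.mp hupper).resolve_left
    (integral_blaschke_mul_inv_one_add_ne_zero (cauchyTransform_im_pos μ hμ hz))

lemma singularPart_ae_mem_exceptionalSet (hμ : μ ≠ 0) (P : ℝ × ℝ → ℂ) {α : ℝ} (hα : α ≠ 0) :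
    ∀ᵐ t ∂((R.μm α).singularPart volume), P (α, t) = 0 → t ∈ exceptionalSet μ P := by
  filter_upwards [R.singularPart_ae_tendsto_neg_inv hμ hα] with t hlim hPt
  have ha := boundaryValue_eq hlim
  refine ⟨ha ▸ hlim, ?_, ?_⟩
  · simpa [ha] using hα
  · simpa [ha] using hPt

end RankOneFamily

end

/-- **Theorem (rank-one perturbations, singular part).**
For any `0 ≠ f ∈ L²(μ)`, the set of `α ∈ ℝ` for which `V α f` vanishes on a set
of positive `(μ_α)_s`-measure has Lebesgue measure zero. -/
theorem cyclic_singular_part_ae_alpha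
{μ : Measure ℝ} [IsFiniteMeasure μ]
    (hsupp : ∃ K : Set ℝ, IsCompact K ∧ μ Kᶜ = 0)
    (one : Lp ℂ 2 μ) (hone : (one : ℝ → ℂ) =ᵐ[μ] fun _ => 1)
    (A : ℝ → (Lp ℂ 2 μ →L[ℂ] Lp ℂ 2 μ))
    (hA : ∀ (α : ℝ) (g : Lp ℂ 2 μ),
      (A α g : ℝ → ℂ) =ᵐ[μ] fun t => t * g t + (α : ℂ) * ⟪one, g⟫)
    (μm : ℝ → Measure ℝ)
    (hμm_fin : ∀ α, IsFiniteMeasure (μm α))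
    (hμm0 : μm 0 = μ)
    (hres : ∀ (α : ℝ) (z : ℂ), z.im ≠ 0 → ∀ g : Lp ℂ 2 μ,
      A α g - z • g = one → ⟪one, g⟫ = ∫ t, ((t : ℂ) - z)⁻¹ ∂(μm α))
    (V : ∀ α : ℝ, Lp ℂ 2 μ ≃ₗᵢ[ℂ] Lp ℂ 2 (μm α))
    (hV : ∀ (α : ℝ) (g : Lp ℂ 2 μ),
      (V α (A α g) : ℝ → ℂ) =ᵐ[μm α] fun t => t * (V α g) t)
    (hV1 : ∀ α : ℝ, (V α one : ℝ → ℂ) =ᵐ[μm α] fun _ => 1)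
    (f : Lp ℂ 2 μ) (hf : f ≠ 0) :
    volume {α : ℝ |
      0 < ((μm α).singularPart volume) {t : ℝ | (V α f : ℝ → ℂ) t = 0}} = 0 := by
  have hμ : μ ≠ 0 := fun h => hf (Lp.eq_zero_iff_ae_eq_zero.mpr (by
    rw [Filter.EventuallyEq, ae_eq_bot.mpr h]
    trivial))
  let R : RankOneFamily μ := ⟨one, hone, A, hA, μm, V, hV, hV1⟩
  obtain ⟨P, hP, hPf⟩ := R.exists_jointly_measurable f
  have hnull : ∀ᵐ α : ℝ, μm α (exceptionalSet μ P) = 0 :=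
    R.ae_measure_eq_zero_of_volume_eq_zero hμ (measurableSet_exceptionalSet μ hP)
      (R.volume_exceptionalSet hμ hf hP hPf)
  suffices h : ∀ᵐ α : ℝ, ((μm α).singularPart volume) {t : ℝ | (V α f : ℝ → ℂ) t = 0} = 0 by
    simpa only [pos_iff_ne_zero] using ae_iff.mp h
  filter_upwards [hnull, Measure.ae_ne volume 0] with α hα hα0
  have hle : (μm α).singularPart volume ≤ μm α := Measure.singularPart_le _ _
  refine measure_eq_zero_iff_ae_notMem.mpr ?_
  filter_upwards [R.singularPart_ae_mem_exceptionalSet hμ P hα0, ae_mono hle (hPf α),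
    ae_mono hle (measure_eq_zero_iff_ae_notMem.mp hα)] with t hmem hPt hnotMem hzero
  exact hnotMem (hmem (hPt.symm.trans hzero))
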